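/- arXiv:1209.5990 — 9 statements merged into one kernel-verified Lean document; each statement's English description precedes it below -/
import Mathlib

section
/- Let K > 0 and T > 0, and suppose f : (0, T) → ℝ is continuously differentiable with f'(ρ) ≤ −4·f(ρ)^2 − K/4 for all ρ ∈ (0, T), and limsup_{ρ→0⁺} ( f(ρ) − 1/(4ρ) ) ≤ 0. Then T ≤ π/√K. -/
/-- ODE form of the diameter estimate: if `f' ≤ -4 f² - K/4` on `(0, T)` with `K > 0` and
`limsup_{ρ→0⁺} (f ρ - 1/(4ρ)) ≤ 0`, then `T ≤ π/√K`. -/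
theorem riccati_diameter_estimate (K T : ℝ) (hK : 0 < K) (hT : 0 < T)
    (f f' : ℝ → ℝ)
    (hf : ∀ ρ ∈ Set.Ioo 0 T, HasDerivAt f (f' ρ) ρ)
    (hf' : ContinuousOn f' (Set.Ioo 0 T))
    (hineq : ∀ ρ ∈ Set.Ioo 0 T, f' ρ ≤ -4 * (f ρ) ^ 2 - K / 4)
    (hlim : Filter.limsup (fun ρ => f ρ - 1 / (4 * ρ)) (nhdsWithin 0 (Set.Ioi 0)) ≤ 0) :
    T ≤ Real.pi / Real.sqrt K := by
  by_contra hcon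
  push Not at hcon
  have hs : 0 < Real.sqrt K := Real.sqrt_pos.mpr hK
  have hsq : Real.sqrt K ^ 2 = K := Real.sq_sqrt hK.le
  set s := Real.sqrt K with hsdef
  have hd : ∀ ρ ∈ Set.Ioo 0 T, HasDerivAt (fun x => Real.arctan (4 * f x / s) + s * x)
      (1 / (1 + (4 * f ρ / s) ^ 2) * (4 * f' ρ / s) + s * 1) ρ := by
    intro ρ hρ
    exact ((((hf ρ hρ).const_mul 4).div_const s).arctan).add ((hasDerivAt_id ρ).const_mul s)
  have hanti : AntitoneOn (fun x => Real.arctan (4 * f x / s) + s * x) (Set.Ioo 0 T) := by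
    apply antitoneOn_of_deriv_nonpos (convex_Ioo 0 T)
    · exact fun x hx => (hd x hx).continuousAt.continuousWithinAt
    · rw [interior_Ioo]
      exact fun x hx => (hd x hx).differentiableAt.differentiableWithinAt
    · rw [interior_Ioo]
      intro x hx
      rw [(hd x hx).deriv]
      have h1 := hineq x hx
      have hpos : 0 < 1 + (4 * f x / s) ^ 2 := by positivity
      have h2 : 4 * f' x / s ≤ -s * (1 + (4 * f x / s) ^ 2) := by
        rw [div_le_iff₀ hs]
        have : -s * (1 + (4 * f x / s) ^ 2) * s = -(s ^ 2) - 16 * f x ^ 2 := by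
          field_simp
          ring
        rw [this, hsq]
        linarith
      have h3 : 1 / (1 + (4 * f x / s) ^ 2) * (4 * f' x / s) ≤ -s := by
        rw [one_div_mul_eq_div, div_le_iff₀ hpos]
        exact h2
      linarith
  have hp : 0 < Real.pi / s := div_pos Real.pi_pos hs
  have h := hanti (a := (T - Real.pi / s) / 2) ⟨by linarith, by linarith⟩
    (b := (T - Real.pi / s) / 2 + Real.pi / s) ⟨by linarith, by linarith⟩ (by linarith)
  have e : s * ((T - Real.pi / s) / 2 + Real.pi / s) = s * ((T - Real.pi / s) / 2) + Real.pi := by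
    field_simp
  simp only [e] at h
  have l1 := Real.arctan_lt_pi_div_two (4 * f ((T - Real.pi / s) / 2) / s)
  have l2 := Real.neg_pi_div_two_lt_arctan (4 * f ((T - Real.pi / s) / 2 + Real.pi / s) / s)
  linarith
end

section
/- Positivity preservation for linear matrix differential inequalities: Let n ≥ 1, let a ≤ b be real numbers, let W : [a, b] → M_n(ℂ) be continuously differentiable with W(ρ) Hermitian for every ρ, and let B : [a, b] → M_n(ℂ) be continuous. If W(a) is positive semidefinite and W'(ρ) + B(ρ)·W(ρ) + W(ρ)·B(ρ)* is positive semidefinite for every ρ ∈ [a, b], then W(ρ) is positive semidefinite for every ρ ∈ [a, b]. -/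
open Matrix ComplexOrder

lemma aux_pert (n : ℕ) (a b : ℝ)
    (W W' B : ℝ → Matrix (Fin n) (Fin n) ℂ)
    (hW : ∀ ρ ∈ Set.Icc a b, ∀ i j,
      HasDerivWithinAt (fun t => W t i j) (W' ρ i j) (Set.Icc a b) ρ)
    (hHerm : ∀ ρ ∈ Set.Icc a b, (W ρ).IsHermitian)
    (hWa : (W a).PosSemidef)
    (hineq : ∀ ρ ∈ Set.Icc a b, (W' ρ + B ρ * W ρ + W ρ * (B ρ)ᴴ).PosSemidef)
    (K : ℝ)
    (hK : ∀ t ∈ Set.Icc a b, ∀ x ∈ Metric.sphere (0 : Fin n → ℂ) 1,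
      0 < (star x ⬝ᵥ ((B t + (B t)ᴴ) *ᵥ x)).re + K * (star x ⬝ᵥ x).re)
    (ε : ℝ) (hε : 0 < ε) :
    ∀ t ∈ Set.Icc a b, ∀ x ∈ Metric.sphere (0 : Fin n → ℂ) 1,
      0 < (star x ⬝ᵥ (W t *ᵥ x)).re + ε * Real.exp (K * (t - a)) * (star x ⬝ᵥ x).re := by
  by_contra! hcon
  obtain ⟨t1, ht1, x1, hx1, hneg1⟩ := hcon
  set g : ℝ × (Fin n → ℂ) → ℝ := fun p =>
    (star p.2 ⬝ᵥ (W p.1 *ᵥ p.2)).re + ε * Real.exp (K * (p.1 - a)) * (star p.2 ⬝ᵥ p.2).re with hg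
  have hQ : ∀ x ∈ Metric.sphere (0 : Fin n → ℂ) 1, 0 < (star x ⬝ᵥ x).re := by
    intro x hx
    have hx0 : x ≠ 0 := by
      rintro rfl
      simp at hx
    exact (Complex.pos_iff.1 (dotProduct_star_self_pos_iff.2 hx0)).1
  have hWc : ∀ i j, ContinuousOn (fun t => W t i j) (Set.Icc a b) := fun i j t ht =>
    (hW t ht i j).continuousWithinAt
  have hgc : ContinuousOn g (Set.Icc a b ×ˢ Metric.sphere (0 : Fin n → ℂ) 1) := by
    have hWc' : ∀ i j, ContinuousOn (fun p : ℝ × (Fin n → ℂ) => W p.1 i j)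
        (Set.Icc a b ×ˢ Metric.sphere (0 : Fin n → ℂ) 1) := fun i j =>
      (hWc i j).comp continuousOn_fst (fun p hp => hp.1)
    simp only [hg, dotProduct, mulVec]
    refine ContinuousOn.add (Complex.continuous_re.comp_continuousOn ?_) (by fun_prop)
    refine continuousOn_finsetSum _ fun i _ => ContinuousOn.mul (by fun_prop) ?_
    exact continuousOn_finsetSum _ fun j _ => (hWc' i j).mul (by fun_prop)
  have hcomp : IsCompact (Set.Icc a b ×ˢ Metric.sphere (0 : Fin n → ℂ) 1) :=
    isCompact_Icc.prod (isCompact_sphere _ _)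
  have hZ : IsCompact ((Set.Icc a b ×ˢ Metric.sphere (0 : Fin n → ℂ) 1) ∩ g ⁻¹' Set.Iic 0) :=
    hcomp.of_isClosed_subset
      (hgc.preimage_isClosed_of_isClosed hcomp.isClosed isClosed_Iic) Set.inter_subset_left
  obtain ⟨⟨t0, x⟩, ⟨⟨ht0, hx⟩, hg0⟩, hmin⟩ := hZ.exists_isMinOn
    ⟨(t1, x1), ⟨ht1, hx1⟩, hneg1⟩ continuous_fst.continuousOn
  simp only at ht0 hx
  have hg0 : g (t0, x) ≤ 0 := hg0
  have hbefore : ∀ t ∈ Set.Icc a b, t < t0 → ∀ y ∈ Metric.sphere (0 : Fin n → ℂ) 1,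
      0 < g (t, y) := by
    intro t ht htt y hy
    by_contra! h
    have := hmin (show (t, y) ∈ _ from ⟨⟨ht, hy⟩, h⟩)
    simp at this
    linarith
  have hat : a < t0 := by
    rcases ht0.1.lt_or_eq with h | h
    · exact h
    exfalso
    subst h
    have h1 := (Complex.nonneg_iff.1 (hWa.dotProduct_mulVec_nonneg x)).1
    have h2 := hQ x hx
    simp only [hg] at hg0
    have := mul_pos (mul_pos hε (Real.exp_pos (K * (a - a)))) h2
    linarith
  have hsub : Set.Ioo a t0 ⊆ Set.Icc a b := fun t ht => ⟨ht.1.le, ht.2.le.trans ht0.2⟩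
  have hne : (nhdsWithin t0 (Set.Ioo a t0)).NeBot := by
    rw [nhdsWithin_Ioo_eq_nhdsLT hat]; infer_instance
  have hge : ∀ y ∈ Metric.sphere (0 : Fin n → ℂ) 1, 0 ≤ g (t0, y) := by
    intro y hy
    have hc : ContinuousWithinAt (fun t => g (t, y)) (Set.Ioo a t0) t0 := by
      have : ContinuousOn (fun t => g (t, y)) (Set.Icc a b) :=
        hgc.comp (f := fun t => (t, y)) (by fun_prop) (fun t ht => ⟨ht, hy⟩)
      exact (this t0 ht0).mono hsub
    refine ge_of_tendsto hc ?_
    filter_upwards [self_mem_nhdsWithin] with t ht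
    exact (hbefore t (hsub ht) ht.2 y hy).le
  have hgz : g (t0, x) = 0 := le_antisymm hg0 (hge x hx)
  set c : ℝ := ε * Real.exp (K * (t0 - a)) with hc
  have hcpos : 0 < c := mul_pos hε (Real.exp_pos _)
  set V : Matrix (Fin n) (Fin n) ℂ := W t0 + (c : ℂ) • 1 with hV
  have hVH : V.IsHermitian := by
    refine (hHerm t0 ht0).add ?_
    simp [Matrix.IsHermitian, conjTranspose_smul]
  have hVg : ∀ y, (star y ⬝ᵥ (V *ᵥ y)).re = g (t0, y) := by
    intro y
    simp only [hV, hg, add_mulVec, smul_mulVec, dotProduct_add, dotProduct_smul, one_mulVec,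
      smul_eq_mul, Complex.add_re, Complex.re_ofReal_mul]
    rw [hc]
  have hVim : ∀ y, (star y ⬝ᵥ (V *ᵥ y)).im = 0 := fun y => hVH.im_star_dotProduct_mulVec_self y
  have hVP : V.PosSemidef := by
    refine PosSemidef.of_dotProduct_mulVec_nonneg hVH fun y => ?_
    rw [Complex.nonneg_iff]
    refine ⟨?_, (hVim y).symm⟩
    by_cases hy : y = 0
    · simp [hy]
    have hny : 0 < ‖y‖ := norm_pos_iff.2 hy
    have h1 := hge (((‖y‖⁻¹ : ℝ) : ℂ) • y) (by simp [norm_smul, hny.ne'])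
    rw [← hVg] at h1
    rw [mulVec_smul, star_smul, smul_dotProduct, dotProduct_smul, smul_smul, smul_eq_mul,
      Complex.star_def, Complex.conj_ofReal, ← Complex.ofReal_mul, Complex.re_ofReal_mul] at h1
    exact nonneg_of_mul_nonneg_right h1 (by positivity)
  have hVx : V *ᵥ x = 0 := by
    refine (hVP.dotProduct_mulVec_zero_iff x).1 ?_
    apply Complex.ext
    · rw [hVg, hgz]; rfl
    · exact hVim x
  have hWx : W t0 *ᵥ x = -((c : ℂ) • x) := by
    rw [hV, add_mulVec, smul_mulVec, one_mulVec] at hVx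
    exact eq_neg_of_add_eq_zero_left hVx
  have hxW : star x ᵥ* W t0 = -((c : ℂ) • star x) := by
    have := congrArg star hWx
    rw [star_mulVec, (hHerm t0 ht0).eq] at this
    simpa using this
  have hP := (Complex.nonneg_iff.1 ((hineq t0 ht0).dotProduct_mulVec_nonneg x)).1
  have hPe : (star x ⬝ᵥ ((W' t0 + B t0 * W t0 + W t0 * (B t0)ᴴ) *ᵥ x)).re
      = (star x ⬝ᵥ (W' t0 *ᵥ x)).re - c * (star x ⬝ᵥ ((B t0 + (B t0)ᴴ) *ᵥ x)).re := by
    rw [add_mulVec, add_mulVec, ← mulVec_mulVec, ← mulVec_mulVec, hWx, dotProduct_add,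
      dotProduct_add, dotProduct_mulVec (star x) (W t0), hxW, add_mulVec, dotProduct_add,
      mulVec_neg, mulVec_smul]
    simp
    ring
  have hder : HasDerivWithinAt (fun t => g (t, x))
      ((star x ⬝ᵥ (W' t0 *ᵥ x)).re + c * K * (star x ⬝ᵥ x).re) (Set.Icc a b) t0 := by
    have h1 : HasDerivWithinAt (fun t => star x ⬝ᵥ (W t *ᵥ x)) (star x ⬝ᵥ (W' t0 *ᵥ x))
        (Set.Icc a b) t0 := by
      simp only [dotProduct, mulVec]
      refine HasDerivWithinAt.fun_sum fun i _ => HasDerivWithinAt.const_mul _ ?_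
      exact HasDerivWithinAt.fun_sum fun j _ => (hW t0 ht0 i j).mul_const _
    have h2 : HasDerivWithinAt (fun t => (star x ⬝ᵥ (W t *ᵥ x)).re)
        (star x ⬝ᵥ (W' t0 *ᵥ x)).re (Set.Icc a b) t0 :=
      (Complex.reCLM.hasFDerivAt.comp_hasDerivWithinAt t0 h1)
    have h3 : HasDerivAt (fun t => ε * Real.exp (K * (t - a)) * (star x ⬝ᵥ x).re)
        (c * K * (star x ⬝ᵥ x).re) t0 := by
      have h4 : HasDerivAt (fun t : ℝ => K * (t - a)) (K * 1) t0 :=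
        ((hasDerivAt_id t0).sub_const a).const_mul K
      refine ((h4.exp.const_mul ε).mul_const ((star x ⬝ᵥ x).re)).congr_deriv ?_
      rw [hc]; ring
    exact h2.add h3.hasDerivWithinAt
  have hpos : 0 < (star x ⬝ᵥ (W' t0 *ᵥ x)).re + c * K * (star x ⬝ᵥ x).re := by
    have := mul_pos hcpos (hK t0 ht0 x hx)
    rw [hPe] at hP
    have hP : 0 ≤ (star x ⬝ᵥ (W' t0 *ᵥ x)).re - c * (star x ⬝ᵥ ((B t0 + (B t0)ᴴ) *ᵥ x)).re := hP
    nlinarith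
  have hsl := (hasDerivWithinAt_iff_tendsto_slope' (s := Set.Ioo a t0) (by simp)).1 (hder.mono hsub)
  have : (star x ⬝ᵥ (W' t0 *ᵥ x)).re + c * K * (star x ⬝ᵥ x).re ≤ 0 := by
    refine le_of_tendsto hsl ?_
    filter_upwards [self_mem_nhdsWithin] with t ht
    rw [slope_def_field, hgz]
    have := hbefore t (hsub ht) ht.2 x hx
    exact div_nonpos_of_nonneg_of_nonpos (by linarith) (by linarith [ht.2])
  linarith

/-- Positivity preservation for linear matrix differential inequalities: if `W` is a `C¹`
Hermitian-matrix-valued function on `[a, b]` with `W a` positive semidefinite and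
`W' + B·W + W·Bᴴ` positive semidefinite on `[a, b]` for a continuous `B`, then `W ρ` is
positive semidefinite for every `ρ ∈ [a, b]`. -/
theorem posSemidef_preserved_linear_matrix_ODE (n : ℕ) (hn : 1 ≤ n)
    (a b : ℝ) (hab : a ≤ b)
    (W W' B : ℝ → Matrix (Fin n) (Fin n) ℂ)
    (hW : ∀ ρ ∈ Set.Icc a b, ∀ i j,
      HasDerivWithinAt (fun t => W t i j) (W' ρ i j) (Set.Icc a b) ρ)
    (hW' : ∀ i j, ContinuousOn (fun ρ => W' ρ i j) (Set.Icc a b))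
    (hHerm : ∀ ρ ∈ Set.Icc a b, (W ρ).IsHermitian)
    (hB : ∀ i j, ContinuousOn (fun ρ => B ρ i j) (Set.Icc a b))
    (hWa : (W a).PosSemidef)
    (hineq : ∀ ρ ∈ Set.Icc a b, (W' ρ + B ρ * W ρ + W ρ * (B ρ)ᴴ).PosSemidef) :
    ∀ ρ ∈ Set.Icc a b, (W ρ).PosSemidef := by
  have hQ : ∀ x ∈ Metric.sphere (0 : Fin n → ℂ) 1, 0 < (star x ⬝ᵥ x).re := by
    intro x hx
    have hx0 : x ≠ 0 := by
      rintro rfl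
      simp at hx
    exact (Complex.pos_iff.1 (dotProduct_star_self_pos_iff.2 hx0)).1
  have hcomp : IsCompact (Set.Icc a b ×ˢ Metric.sphere (0 : Fin n → ℂ) 1) :=
    isCompact_Icc.prod (isCompact_sphere _ _)
  have hcont : ContinuousOn (fun p : ℝ × (Fin n → ℂ) =>
      (star p.2 ⬝ᵥ ((B p.1 + (B p.1)ᴴ) *ᵥ p.2)).re / (star p.2 ⬝ᵥ p.2).re)
      (Set.Icc a b ×ˢ Metric.sphere (0 : Fin n → ℂ) 1) := by
    have hBc' : ∀ i j, ContinuousOn (fun p : ℝ × (Fin n → ℂ) => B p.1 i j)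
        (Set.Icc a b ×ˢ Metric.sphere (0 : Fin n → ℂ) 1) := fun i j =>
      (hB i j).comp continuousOn_fst (fun p hp => hp.1)
    refine ContinuousOn.div ?_ ?_ (fun p hp => (hQ p.2 hp.2).ne')
    · simp only [dotProduct, mulVec, Matrix.add_apply, conjTranspose_apply]
      refine Complex.continuous_re.comp_continuousOn ?_
      refine continuousOn_finsetSum _ fun i _ => ContinuousOn.mul (by fun_prop) ?_
      exact continuousOn_finsetSum _ fun j _ => ((hBc' i j).add (hBc' j i).star).mul (by fun_prop)
    · simp only [dotProduct]
      fun_prop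
  obtain ⟨C, hC⟩ := hcomp.exists_bound_of_continuousOn hcont
  have hK : ∀ t ∈ Set.Icc a b, ∀ x ∈ Metric.sphere (0 : Fin n → ℂ) 1,
      0 < (star x ⬝ᵥ ((B t + (B t)ᴴ) *ᵥ x)).re + (C + 1) * (star x ⬝ᵥ x).re := by
    intro t ht x hx
    have h1 := (abs_le.1 (hC (t, x) ⟨ht, hx⟩)).1
    have h2 := hQ x hx
    simp only at h1
    rw [le_div_iff₀ h2] at h1
    nlinarith
  intro t ht
  have key : ∀ x ∈ Metric.sphere (0 : Fin n → ℂ) 1, 0 ≤ (star x ⬝ᵥ (W t *ᵥ x)).re := by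
    intro x hx
    have hD : 0 < Real.exp ((C + 1) * (t - a)) * (star x ⬝ᵥ x).re :=
      mul_pos (Real.exp_pos _) (hQ x hx)
    refine le_of_forall_pos_le_add fun δ hδ => ?_
    have := aux_pert n a b W W' B hW hHerm hWa hineq (C + 1) hK
      (δ / (Real.exp ((C + 1) * (t - a)) * (star x ⬝ᵥ x).re)) (div_pos hδ hD) t ht x hx
    rw [mul_assoc, div_mul_cancel₀ _ hD.ne'] at this
    exact this.le
  refine PosSemidef.of_dotProduct_mulVec_nonneg (hHerm t ht) fun y => ?_
  rw [Complex.nonneg_iff]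
  refine ⟨?_, ((hHerm t ht).im_star_dotProduct_mulVec_self y).symm⟩
  by_cases hy : y = 0
  · simp [hy]
  have hny : 0 < ‖y‖ := norm_pos_iff.2 hy
  have h1 := key (((‖y‖⁻¹ : ℝ) : ℂ) • y) (by simp [norm_smul, hny.ne'])
  rw [mulVec_smul, star_smul, smul_dotProduct, dotProduct_smul, smul_smul, smul_eq_mul,
    Complex.star_def, Complex.conj_ofReal, ← Complex.ofReal_mul, Complex.re_ofReal_mul] at h1
  exact nonneg_of_mul_nonneg_right h1 (by positivity)
end

section
/- Matrix Riccati comparison: Let n ≥ 1, T > 0, let X, Y : (0, T] → M_n(ℂ) be continuously differentiable with X(ρ), Y(ρ) Hermitian for every ρ, and let A : (0, T] → M_n(ℂ) be continuous. Assume that ( Y'(ρ) + Y(ρ)² + A(ρ)Y(ρ) + Y(ρ)A(ρ)* ) − ( X'(ρ) + X(ρ)² + A(ρ)X(ρ) + X(ρ)A(ρ)* ) is positive semidefinite for all ρ ∈ (0, T], and that there exists ρ₀ ∈ (0, T] with Y(ρ) − X(ρ) positive semidefinite for all ρ ∈ (0, ρ₀]. Then Y(ρ) − X(ρ) is positive semidefinite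 for all ρ ∈ (0, T]. -/
open Matrix ComplexOrder

def QF {n : ℕ} (M : Matrix (Fin n) (Fin n) ℂ) (v : Fin n → ℂ) : ℝ := (star v ⬝ᵥ M *ᵥ v).re

lemma QF_add {n : ℕ} (M N : Matrix (Fin n) (Fin n) ℂ) (v : Fin n → ℂ) :
    QF (M + N) v = QF M v + QF N v := by
  simp [QF, add_mulVec, dotProduct_add]

lemma QF_sub {n : ℕ} (M N : Matrix (Fin n) (Fin n) ℂ) (v : Fin n → ℂ) :
    QF (M - N) v = QF M v - QF N v := by
  simp [QF, sub_mulVec, dotProduct_sub]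

lemma QF_eq {n : ℕ} (M : Matrix (Fin n) (Fin n) ℂ) (v : Fin n → ℂ) :
    QF M v = (∑ i, ∑ j, star (v i) * (M i j * v j)).re := by
  simp [QF, dotProduct, mulVec, Finset.mul_sum]

lemma QF_cont {n : ℕ} {s : Set ℝ} (M : ℝ → Matrix (Fin n) (Fin n) ℂ)
    (h : ∀ i j, ContinuousOn (fun t => M t i j) s) :
    ContinuousOn (fun p : ℝ × (Fin n → ℂ) => QF (M p.1) p.2) (s ×ˢ Set.univ) := by
  simp only [QF_eq]
  apply Complex.continuous_re.comp_continuousOn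
  refine continuousOn_finsetSum _ fun i _ => continuousOn_finsetSum _ fun j _ => ?_
  have := (h i j).comp (continuousOn_fst (s := s ×ˢ (Set.univ : Set (Fin n → ℂ)))) (fun p hp => hp.1)
  exact ContinuousOn.mul (by fun_prop) (this.mul (by fun_prop))

lemma QF_deriv {n : ℕ} {s : Set ℝ} {t : ℝ} (M : ℝ → Matrix (Fin n) (Fin n) ℂ)
    (M' : Matrix (Fin n) (Fin n) ℂ) (v : Fin n → ℂ)
    (h : ∀ i j, HasDerivWithinAt (fun t => M t i j) (M' i j) s t) :
    HasDerivWithinAt (fun t => QF (M t) v) (QF M' v) s t := by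
  simp only [QF_eq]
  apply HasFDerivAt.comp_hasDerivWithinAt (l := Complex.re) (l' := Complex.reCLM) t
  · exact Complex.reCLM.hasFDerivAt
  · refine HasDerivWithinAt.fun_sum fun i _ => HasDerivWithinAt.fun_sum fun j _ => ?_
    exact ((h i j).mul_const _).const_mul _

lemma QF_smul {n : ℕ} (M : Matrix (Fin n) (Fin n) ℂ) (r : ℝ) (v : Fin n → ℂ) :
    QF M ((r : ℂ) • v) = r ^ 2 * QF M v := by
  simp only [QF, star_smul, mulVec_smul, dotProduct_smul, smul_dotProduct]
  simp; ring

lemma QF_one_smul {n : ℕ} (r : ℝ) (v : Fin n → ℂ) :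
    QF ((r : ℂ) • (1 : Matrix (Fin n) (Fin n) ℂ)) v = r * QF 1 v := by
  simp [QF, smul_mulVec]

lemma QF_one {n : ℕ} (v : Fin n → ℂ) :
    QF (1 : Matrix (Fin n) (Fin n) ℂ) v = ∑ i, ‖v i‖ ^ 2 := by
  simp only [QF, one_mulVec, dotProduct, Complex.re_sum]
  refine Finset.sum_congr rfl fun i _ => ?_
  rw [← Complex.normSq_eq_norm_sq, Complex.normSq_apply]; simp

lemma QF_one_pos {n : ℕ} {v : Fin n → ℂ} (h : v ≠ 0) :
    0 < QF (1 : Matrix (Fin n) (Fin n) ℂ) v := by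
  rw [QF_one]
  obtain ⟨i, hi⟩ := Function.ne_iff.1 h
  refine Finset.sum_pos' (fun i _ => by positivity) ⟨i, Finset.mem_univ _, ?_⟩
  have : 0 < ‖v i‖ := norm_pos_iff.2 hi
  positivity

lemma QF_scale {n : ℕ} {w : Fin n → ℂ} (h : w ≠ 0) :
    ∃ v : Fin n → ℂ, QF 1 v = 1 ∧ ∃ r : ℝ, 0 < r ∧ w = (r : ℂ) • v := by
  have hp := QF_one_pos h
  set r := Real.sqrt (QF 1 w) with hr
  have hr0 : 0 < r := Real.sqrt_pos.2 hp
  refine ⟨((r⁻¹ : ℝ) : ℂ) • w, ?_, r, hr0, ?_⟩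
  · rw [QF_smul, ← Real.sq_sqrt hp.le, ← hr]; field_simp
  · rw [smul_smul, ← Complex.ofReal_mul, mul_inv_cancel₀ hr0.ne']; simp

lemma sphere_compact (n : ℕ) : IsCompact {v : Fin n → ℂ | QF 1 v = 1} := by
  refine Metric.isCompact_of_isClosed_isBounded ?_ ?_
  · simp only [QF_one]
    exact isClosed_eq (by fun_prop) (by fun_prop)
  · refine (Metric.isBounded_closedBall (x := (0 : Fin n → ℂ)) (r := 1)).subset fun v hv => ?_
    rw [mem_closedBall_zero_iff, pi_norm_le_iff_of_nonneg zero_le_one]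
    intro i
    have h1 : ‖v i‖ ^ 2 ≤ ∑ i, ‖v i‖ ^ 2 :=
      Finset.single_le_sum (f := fun i => ‖v i‖ ^ 2) (fun i _ => by positivity) (Finset.mem_univ i)
    rw [← QF_one, hv] at h1
    nlinarith [norm_nonneg (v i)]

lemma herm_psd {n : ℕ} {M : Matrix (Fin n) (Fin n) ℂ} (hM : M.IsHermitian)
    (h : ∀ v, 0 ≤ QF M v) : M.PosSemidef := by
  refine PosSemidef.of_dotProduct_mulVec_nonneg hM fun v => ?_
  rw [Complex.le_def]
  exact ⟨h v, (hM.im_star_dotProduct_mulVec_self v).symm⟩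

lemma psd_QF {n : ℕ} {M : Matrix (Fin n) (Fin n) ℂ} (hM : M.PosSemidef)
    (v) : 0 ≤ QF M v := (Complex.le_def.1 (hM.dotProduct_mulVec_nonneg v)).1

lemma psd_zero {n : ℕ} {M : Matrix (Fin n) (Fin n) ℂ} (hM : M.PosSemidef)
    {v} (h : QF M v = 0) : M *ᵥ v = 0 := by
  rw [← hM.dotProduct_mulVec_zero_iff]
  exact Complex.ext h (hM.1.im_star_dotProduct_mulVec_self v)

/-- derivative of the quadratic form of the drift at an eigenvector -/
lemma QF_drift {n : ℕ} {B Z : Matrix (Fin n) (Fin n) ℂ} (hZ : Z.IsHermitian) {v : Fin n → ℂ}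
    {l : ℝ} (h : Z *ᵥ v = (l : ℂ) • v) :
    QF (B * Z + Z * Bᴴ) v = l * QF (B + Bᴴ) v := by
  rw [QF_add, QF_add, mul_add]
  congr 1
  · simp [QF, ← mulVec_mulVec, h, mulVec_smul]
  · have h2 : star v ᵥ* Z = (l : ℂ) • star v := by
      have := congrArg star h
      rw [star_mulVec, hZ.eq] at this
      simpa using this
    simp only [QF]
    rw [← mulVec_mulVec, dotProduct_mulVec, h2]
    simp

lemma left_deriv {g : ℝ → ℝ} {g' a t : ℝ} (hat : a < t)
    (hg : HasDerivWithinAt g g' (Set.Icc a t) t) (hm : ∀ s ∈ Set.Icc a t, g t ≤ g s) :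
    g' ≤ 0 := by
  have h1 : IsLocalMinOn g (Set.Icc a t) t := by
    filter_upwards [self_mem_nhdsWithin] with s hs using hm s hs
  have h2 := h1.hasFDerivWithinAt_nonneg hg.hasFDerivWithinAt
    (y := a - t) (sub_mem_posTangentConeAt_of_segment_subset (by
      rw [segment_symm, segment_eq_Icc hat.le]))
  simp at h2
  nlinarith

/-- Matrix Riccati comparison: if
`Y' + Y² + AY + YAᴴ - (X' + X² + AX + XAᴴ)` is positive semidefinite on `(0, T]` for `C¹`
Hermitian-matrix-valued `X, Y` and continuous `A`, and `Y - X` is positive semidefinite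
near `0`, then `Y - X` is positive semidefinite on all of `(0, T]`. -/
theorem matrix_riccati_comparison (n : ℕ) (hn : 1 ≤ n) (T : ℝ) (hT : 0 < T)
    (X X' Y Y' A : ℝ → Matrix (Fin n) (Fin n) ℂ)
    (hX : ∀ ρ ∈ Set.Ioc 0 T, ∀ i j,
      HasDerivWithinAt (fun t => X t i j) (X' ρ i j) (Set.Ioc 0 T) ρ)
    (hX' : ∀ i j, ContinuousOn (fun ρ => X' ρ i j) (Set.Ioc 0 T))
    (hY : ∀ ρ ∈ Set.Ioc 0 T, ∀ i j,
      HasDerivWithinAt (fun t => Y t i j) (Y' ρ i j) (Set.Ioc 0 T) ρ)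
    (hY' : ∀ i j, ContinuousOn (fun ρ => Y' ρ i j) (Set.Ioc 0 T))
    (hHermX : ∀ ρ ∈ Set.Ioc 0 T, (X ρ).IsHermitian)
    (hHermY : ∀ ρ ∈ Set.Ioc 0 T, (Y ρ).IsHermitian)
    (hA : ∀ i j, ContinuousOn (fun ρ => A ρ i j) (Set.Ioc 0 T))
    (hineq : ∀ ρ ∈ Set.Ioc 0 T,
      ((Y' ρ + Y ρ ^ 2 + A ρ * Y ρ + Y ρ * (A ρ)ᴴ)
        - (X' ρ + X ρ ^ 2 + A ρ * X ρ + X ρ * (A ρ)ᴴ)).PosSemidef)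
    (hinit : ∃ ρ₀ ∈ Set.Ioc 0 T, ∀ ρ ∈ Set.Ioc 0 ρ₀, (Y ρ - X ρ).PosSemidef) :
    ∀ ρ ∈ Set.Ioc 0 T, (Y ρ - X ρ).PosSemidef := by
  obtain ⟨a, ha, hinit⟩ := hinit
  by_contra hcon
  push Not at hcon
  obtain ⟨t0, ht0, hneg⟩ := hcon
  have hat0 : a < t0 := by
    by_contra h
    exact hneg (hinit t0 ⟨ht0.1, not_lt.1 h⟩)
  have hsub : Set.Icc a T ⊆ Set.Ioc 0 T := fun t ht => ⟨ha.1.trans_le ht.1, ht.2⟩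
  set Z : ℝ → Matrix (Fin n) (Fin n) ℂ := fun t => Y t - X t with hZdef
  set B : ℝ → Matrix (Fin n) (Fin n) ℂ := fun t => A t + (1 / 2 : ℂ) • (X t + Y t) with hBdef
  have hZH : ∀ t ∈ Set.Ioc 0 T, (Z t).IsHermitian := fun t ht => (hHermY t ht).sub (hHermX t ht)
  have hXc : ∀ i j, ContinuousOn (fun t => X t i j) (Set.Ioc 0 T) :=
    fun i j t ht => (hX t ht i j).continuousWithinAt
  have hYc : ∀ i j, ContinuousOn (fun t => Y t i j) (Set.Ioc 0 T) :=
    fun i j t ht => (hY t ht i j).continuousWithinAt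
  have hZc : ∀ i j, ContinuousOn (fun t => Z t i j) (Set.Icc a T) :=
    fun i j => ((hYc i j).sub (hXc i j)).mono hsub
  have hBc : ∀ i j, ContinuousOn (fun t => B t i j) (Set.Icc a T) := fun i j =>
    ((hA i j).add (((hXc i j).add (hYc i j)).const_smul (1 / 2 : ℂ))).mono hsub
  have hBBc : ∀ i j, ContinuousOn (fun t => (B t + (B t)ᴴ) i j) (Set.Icc a T) := fun i j =>
    (hBc i j).add ((hBc j i).star)
  have hcpt : IsCompact (Set.Icc a T ×ˢ {v : Fin n → ℂ | QF 1 v = 1}) :=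
    isCompact_Icc.prod (sphere_compact n)
  have hss : Set.Icc a T ×ˢ {v : Fin n → ℂ | QF 1 v = 1} ⊆ Set.Icc a T ×ˢ Set.univ :=
    Set.prod_mono_right (Set.subset_univ _)
  obtain ⟨C, hC⟩ := hcpt.bddBelow_image ((QF_cont _ hBBc).mono hss)
  have hC' : ∀ t ∈ Set.Icc a T, ∀ v, QF 1 v = 1 → C ≤ QF (B t + (B t)ᴴ) v := fun t ht v hv =>
    hC ⟨(t, v), ⟨ht, hv⟩, rfl⟩
  set K : ℝ := 1 - C with hK
  have hgc : ContinuousOn (fun p : ℝ × (Fin n → ℂ) => Real.exp (-K * p.1) * QF (Z p.1) p.2)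
      (Set.Icc a T ×ˢ {v : Fin n → ℂ | QF 1 v = 1}) :=
    ContinuousOn.mul (by fun_prop) ((QF_cont _ hZc).mono hss)
  obtain ⟨w, hw⟩ : ∃ w, QF (Z t0) w < 0 := by
    by_contra h
    push Not at h
    exact hneg (herm_psd (hZH t0 ht0) h)
  have hw0 : w ≠ 0 := by
    rintro rfl
    simp [QF] at hw
  obtain ⟨v0, hv0, r, hr, rfl⟩ := QF_scale hw0
  rw [QF_smul] at hw
  have hv0n : QF (Z t0) v0 < 0 := by
    by_contra h
    push Not at h
    have : 0 ≤ r ^ 2 * QF (Z t0) v0 := by positivity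
    linarith
  have hmem0 : ((t0, v0) : ℝ × (Fin n → ℂ)) ∈ Set.Icc a T ×ˢ {v : Fin n → ℂ | QF 1 v = 1} :=
    ⟨⟨hat0.le, ht0.2⟩, hv0⟩
  obtain ⟨⟨t, v⟩, ⟨ht, hv⟩, hmin⟩ := hcpt.exists_isMinOn ⟨_, hmem0⟩ hgc
  simp only [Set.mem_setOf_eq] at ht hv
  have hmin' : ∀ s ∈ Set.Icc a T, ∀ u, QF 1 u = 1 →
      Real.exp (-K * t) * QF (Z t) v ≤ Real.exp (-K * s) * QF (Z s) u := fun s hs u hu =>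
    hmin (a := (s, u)) ⟨hs, hu⟩
  set l : ℝ := QF (Z t) v with hl
  have hlneg : l < 0 := by
    have h1 := hmin' t0 ⟨hat0.le, ht0.2⟩ v0 hv0
    have h2 : Real.exp (-K * t0) * QF (Z t0) v0 < 0 :=
      mul_neg_of_pos_of_neg (Real.exp_pos _) hv0n
    by_contra h
    push Not at h
    have : 0 ≤ Real.exp (-K * t) * l := by positivity
    linarith
  have hat : a < t := by
    refine lt_of_le_of_ne ht.1 ?_
    rintro rfl
    have := psd_QF (hinit a ⟨ha.1, le_rfl⟩) v
    exact absurd hlneg (not_lt.2 this)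
  have hpsd : (Z t - (l : ℂ) • (1 : Matrix (Fin n) (Fin n) ℂ)).PosSemidef := by
    refine herm_psd ((hZH t (hsub ht)).sub ?_) fun u => ?_
    · simp [IsHermitian, conjTranspose_smul]
    · by_cases hu : u = 0
      · simp [hu, QF]
      obtain ⟨u', hu', r, hr, rfl⟩ := QF_scale hu
      rw [QF_smul, QF_sub, QF_one_smul, hu']
      have := le_of_mul_le_mul_left (hmin' t ht u' hu') (Real.exp_pos _)
      have : 0 ≤ QF (Z t) u' - l * 1 := by linarith
      positivity
  have heig : Z t *ᵥ v = (l : ℂ) • v := by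
    have := psd_zero hpsd (v := v) (by rw [QF_sub, QF_one_smul, hv, hl]; ring)
    simpa [sub_mulVec, smul_mulVec, sub_eq_zero] using this
  have hdr := QF_drift (B := B t) (hZH t (hsub ht)) heig
  have hq := psd_QF (hineq t (hsub ht)) v
  have hid : (Y' t + Y t ^ 2 + A t * Y t + Y t * (A t)ᴴ)
        - (X' t + X t ^ 2 + A t * X t + X t * (A t)ᴴ)
      = (Y' t - X' t) + (B t * Z t + Z t * (B t)ᴴ) := by
    have hBH : (B t)ᴴ = (A t)ᴴ + (1 / 2 : ℂ) • (X t + Y t) := by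
      simp only [hBdef, conjTranspose_add, conjTranspose_smul, (hHermX t (hsub ht)).eq,
        (hHermY t (hsub ht)).eq]
      simp
    rw [hBH]
    have h2 : (1 / 2 : ℂ) • ((X t + Y t) * Z t) + (1 / 2 : ℂ) • (Z t * (X t + Y t))
        = Y t ^ 2 - X t ^ 2 := by
      rw [← smul_add]
      have : (X t + Y t) * Z t + Z t * (X t + Y t) = (2 : ℂ) • (Y t ^ 2 - X t ^ 2) := by
        rw [two_smul]; simp only [hZdef]; noncomm_ring
      rw [this, smul_smul]; norm_num
    have h3 : B t * Z t + Z t * ((A t)ᴴ + (1 / 2 : ℂ) • (X t + Y t))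
        = A t * Z t + Z t * (A t)ᴴ + (Y t ^ 2 - X t ^ 2) := by
      rw [← h2]
      simp only [hBdef, add_mul, mul_add, smul_mul_assoc, mul_smul_comm, smul_add]
      abel
    rw [h3]
    simp only [hZdef]
    noncomm_ring
  rw [hid, QF_add, hdr] at hq
  have hder : HasDerivWithinAt (fun s => QF (Z s) v) (QF (Y' t - X' t) v) (Set.Icc a t) t :=
    QF_deriv _ _ _ fun i j => ((hY t (hsub ht) i j).sub (hX t (hsub ht) i j)).mono
      ((Set.Icc_subset_Icc_right ht.2).trans hsub)
  have hexp : HasDerivWithinAt (fun s => Real.exp (-K * s)) (Real.exp (-K * t) * (-K))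
      (Set.Icc a t) t := by
    have := ((hasDerivAt_id t).const_mul (-K)).exp
    simpa using this.hasDerivWithinAt
  have hfin := left_deriv hat (hexp.mul hder) fun s hs =>
    hmin' s ⟨hs.1, hs.2.trans ht.2⟩ v hv
  have hb := hC' t ht v hv
  have hfin2 : Real.exp (-K * t) * (QF (Y' t - X' t) v - K * l) ≤ 0 := by
    calc _ = _ := by rw [hl]; ring
      _ ≤ 0 := hfin
  have hfin3 : QF (Y' t - X' t) v - K * l ≤ 0 := by
    by_contra h
    push Not at h
    have := mul_pos (Real.exp_pos (-K * t)) h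
    linarith
  nlinarith
end

section
/- Matrix Riccati comparison with a rank-one quadratic term: Let n ≥ 1, T > 0, and let X, Y : (0, T] → M_n(ℂ) be continuously differentiable with X(ρ), Y(ρ) Hermitian for every ρ. Let e₁ ∈ ℂⁿ be the first standard basis vector. Assume that ( Y'(ρ) + Y(ρ)² + (Y(ρ)e₁)(Y(ρ)e₁)* ) − ( X'(ρ) + X(ρ)² + (X(ρ)e₁)(X(ρ)e₁)* ) is positive semidefinite for all ρ ∈ (0, T], and that there exists ρ₀ ∈ (0, T] with Y(ρ) − X(ρ) positive semidefinite for all ρ ∈ (0, ρ₀]. Then Y(ρ) − X(ρ) is positive semidefinite for all ρ ∈ (0, T]. -/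
open Matrix ComplexOrder

lemma aux_slope (φ : ℝ → ℝ) (d a t : ℝ) (hat : a < t)
    (hd : HasDerivWithinAt φ d (Set.Ioo a t) t) (h0 : φ t ≤ 0)
    (hpos : ∀ s ∈ Set.Ioo a t, 0 ≤ φ s) : d ≤ 0 := by
  rw [hasDerivWithinAt_iff_tendsto_slope' (by simp)] at hd
  have : (nhdsWithin t (Set.Ioo a t)).NeBot := right_nhdsWithin_Ioo_neBot hat
  refine le_of_tendsto hd ?_
  filter_upwards [self_mem_nhdsWithin] with s hs
  rw [slope_def_field]
  apply div_nonpos_of_nonneg_of_nonpos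
  · linarith [hpos s hs]
  · linarith [hs.2]

lemma aux_cont {n : ℕ} (M : ℝ → Matrix (Fin n) (Fin n) ℂ) (s : Set ℝ)
    (h : ∀ i j, ContinuousOn (fun t => M t i j) s) : ContinuousOn M s :=
  continuousOn_pi.2 fun i => continuousOn_pi.2 fun j => h i j

lemma aux_deriv {n : ℕ} (M : ℝ → Matrix (Fin n) (Fin n) ℂ) (M' : Matrix (Fin n) (Fin n) ℂ)
    (s : Set ℝ) (t : ℝ) (v : Fin n → ℂ)
    (h : ∀ i j, HasDerivWithinAt (fun t => M t i j) (M' i j) s t) :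
    HasDerivWithinAt (fun t => (star v ⬝ᵥ (M t *ᵥ v)).re) ((star v ⬝ᵥ (M' *ᵥ v)).re) s t := by
  have h1 : HasDerivWithinAt (fun t => (star v ⬝ᵥ (M t *ᵥ v))) ((star v ⬝ᵥ (M' *ᵥ v))) s t := by
    simp only [dotProduct, mulVec]
    refine HasDerivWithinAt.fun_sum fun i _ => ?_
    refine HasDerivWithinAt.const_mul _ ?_
    refine HasDerivWithinAt.fun_sum fun j _ => ?_
    exact (h i j).mul_const _
  exact Complex.reCLM.hasFDerivAt.comp_hasDerivWithinAt t h1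

lemma aux_psd {n : ℕ} (M : Matrix (Fin n) (Fin n) ℂ) (hM : M.IsHermitian)
    (h : ∀ v : Fin n → ℂ, 0 ≤ (star v ⬝ᵥ (M *ᵥ v)).re) : M.PosSemidef := by
  refine Matrix.PosSemidef.of_dotProduct_mulVec_nonneg hM fun v => ?_
  rw [Complex.nonneg_iff]
  exact ⟨h v, (hM.im_star_dotProduct_mulVec_self v).symm⟩

lemma aux_psd_sphere {n : ℕ} (M : Matrix (Fin n) (Fin n) ℂ)
    (h : ∀ v ∈ Metric.sphere (0 : Fin n → ℂ) 1, 0 ≤ (star v ⬝ᵥ (M *ᵥ v)).re) (v : Fin n → ℂ) :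
    0 ≤ (star v ⬝ᵥ (M *ᵥ v)).re := by
  by_cases hv : v = 0
  · simp [hv]
  have hv' : ‖v‖ ≠ 0 := by simpa using hv
  have := h (((‖v‖⁻¹ : ℝ) : ℂ) • v) (by simp [norm_smul, hv'])
  rw [mulVec_smul, star_smul, smul_dotProduct, dotProduct_smul] at this
  simp only [smul_eq_mul, Complex.star_def, Complex.conj_ofReal, Complex.re_ofReal_mul] at this
  have h2 : 0 < ‖v‖⁻¹ := by positivity
  exact (mul_nonneg_iff_of_pos_left h2).1 ((mul_nonneg_iff_of_pos_left h2).1 this)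

lemma aux_self_pos {n : ℕ} (v : Fin n → ℂ) (hv : v ≠ 0) : 0 < (star v ⬝ᵥ v).re := by
  have := dotProduct_star_self_pos_iff.2 hv
  exact (Complex.pos_iff.1 this).1

lemma aux_alg {n : ℕ} (X Y : Matrix (Fin n) (Fin n) ℂ) (hX : X.IsHermitian) (hY : Y.IsHermitian)
    (e v : Fin n → ℂ) (c : ℝ) (h : Y *ᵥ v = X *ᵥ v - (c : ℂ) • v) :
    (star v ⬝ᵥ ((Y ^ 2 + vecMulVec (Y *ᵥ e) (star (Y *ᵥ e))) *ᵥ v)).re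
      - (star v ⬝ᵥ ((X ^ 2 + vecMulVec (X *ᵥ e) (star (X *ᵥ e))) *ᵥ v)).re
    = - c * ((star v ⬝ᵥ ((X + Y) *ᵥ v)).re
        + (star (star e ⬝ᵥ v) * (star e ⬝ᵥ ((X + Y) *ᵥ v))).re) := by
  have key : ∀ Z : Matrix (Fin n) (Fin n) ℂ, Z.IsHermitian →
      star v ⬝ᵥ ((Z ^ 2 + vecMulVec (Z *ᵥ e) (star (Z *ᵥ e))) *ᵥ v)
      = star (Z *ᵥ v) ⬝ᵥ (Z *ᵥ v) + star (star e ⬝ᵥ (Z *ᵥ v)) * (star e ⬝ᵥ (Z *ᵥ v)) := by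
    intro Z hZ
    have h1 : star (Z *ᵥ e) ⬝ᵥ v = star e ⬝ᵥ (Z *ᵥ v) := by
      rw [star_mulVec, hZ.eq, dotProduct_mulVec]
    have h2 : star v ⬝ᵥ (Z *ᵥ e) = star (star e ⬝ᵥ (Z *ᵥ v)) := by
      rw [← h1, star_dotProduct]
    rw [add_mulVec, dotProduct_add, vecMulVec_mulVec, h1, pow_two, ← mulVec_mulVec, star_mulVec,
      hZ.eq, ← dotProduct_mulVec]
    congr 1
    rw [← h2]
    simp [dotProduct_smul, mul_comm]
  rw [key X hX, key Y hY, add_mulVec, h]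
  generalize X *ᵥ v = a
  have h3 : star a ⬝ᵥ v = star (star v ⬝ᵥ a) := by
    rw [star_dotProduct]
  simp only [star_sub, star_smul, sub_dotProduct, dotProduct_sub, dotProduct_add, smul_dotProduct,
    dotProduct_smul, h3, smul_eq_mul]
  generalize star v ⬝ᵥ a = z1
  generalize star a ⬝ᵥ a = z2
  generalize star v ⬝ᵥ v = z3
  generalize star e ⬝ᵥ a = z4
  generalize star e ⬝ᵥ v = z5
  simp
  ring

set_option maxHeartbeats 1000000 in
/-- Matrix Riccati comparison with a rank-one quadratic term: if
`Y' + Y² + (Ye₁)(Ye₁)ᴴ - (X' + X² + (Xe₁)(Xe₁)ᴴ)` is positive semidefinite on `(0, T]`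
for `C¹` Hermitian-matrix-valued `X, Y`, where `e₁` is the first standard basis vector,
and `Y - X` is positive semidefinite near `0`, then `Y - X` is positive semidefinite on
all of `(0, T]`. -/
theorem matrix_riccati_comparison_rank_one (n : ℕ) (hn : 1 ≤ n) (T : ℝ) (hT : 0 < T)
    (X X' Y Y' : ℝ → Matrix (Fin n) (Fin n) ℂ)
    (e₁ : Fin n → ℂ) (he₁ : e₁ = fun i : Fin n => if (i : ℕ) = 0 then (1 : ℂ) else 0)
    (hX : ∀ ρ ∈ Set.Ioc 0 T, ∀ i j,
      HasDerivWithinAt (fun t => X t i j) (X' ρ i j) (Set.Ioc 0 T) ρ)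
    (hX' : ∀ i j, ContinuousOn (fun ρ => X' ρ i j) (Set.Ioc 0 T))
    (hY : ∀ ρ ∈ Set.Ioc 0 T, ∀ i j,
      HasDerivWithinAt (fun t => Y t i j) (Y' ρ i j) (Set.Ioc 0 T) ρ)
    (hY' : ∀ i j, ContinuousOn (fun ρ => Y' ρ i j) (Set.Ioc 0 T))
    (hHermX : ∀ ρ ∈ Set.Ioc 0 T, (X ρ).IsHermitian)
    (hHermY : ∀ ρ ∈ Set.Ioc 0 T, (Y ρ).IsHermitian)
    (hineq : ∀ ρ ∈ Set.Ioc 0 T,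
      ((Y' ρ + Y ρ ^ 2 + vecMulVec (Y ρ *ᵥ e₁) (star (Y ρ *ᵥ e₁)))
        - (X' ρ + X ρ ^ 2 + vecMulVec (X ρ *ᵥ e₁) (star (X ρ *ᵥ e₁)))).PosSemidef)
    (hinit : ∃ ρ₀ ∈ Set.Ioc 0 T, ∀ ρ ∈ Set.Ioc 0 ρ₀, (Y ρ - X ρ).PosSemidef) :
    ∀ ρ ∈ Set.Ioc 0 T, (Y ρ - X ρ).PosSemidef := by
  obtain ⟨ρ₀, hρ₀, hinit⟩ := hinit
  have hsub : Set.Icc ρ₀ T ⊆ Set.Ioc 0 T := fun x hx => ⟨hρ₀.1.trans_le hx.1, hx.2⟩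
  have cX : ContinuousOn X (Set.Icc ρ₀ T) := aux_cont X _ fun i j x hx =>
    ((hX x (hsub hx) i j).continuousWithinAt).mono hsub
  have cY : ContinuousOn Y (Set.Icc ρ₀ T) := aux_cont Y _ fun i j x hx =>
    ((hY x (hsub hx) i j).continuousWithinAt).mono hsub
  set S := Metric.sphere (0 : Fin n → ℂ) 1 with hS
  have hScomp : IsCompact S := isCompact_sphere _ _
  have hS0 : ∀ v ∈ S, v ≠ 0 := by
    rintro v hv rfl
    simp [hS] at hv
  have hC : IsCompact (Set.Icc ρ₀ T ×ˢ S) := isCompact_Icc.prod hScomp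
  have cX2 : ContinuousOn (fun p : ℝ × (Fin n → ℂ) => X p.1) (Set.Icc ρ₀ T ×ˢ S) :=
    cX.comp continuousOn_fst fun p hp => hp.1
  have cY2 : ContinuousOn (fun p : ℝ × (Fin n → ℂ) => Y p.1) (Set.Icc ρ₀ T ×ˢ S) :=
    cY.comp continuousOn_fst fun p hp => hp.1
  have c2 : ContinuousOn (fun p : ℝ × (Fin n → ℂ) => ((X p.1, Y p.1), p.2)) (Set.Icc ρ₀ T ×ˢ S) :=
    (cX2.prodMk cY2).prodMk continuousOn_snd
  obtain ⟨h, hh⟩ : ∃ h : ℝ × (Fin n → ℂ) → ℝ, h = fun p =>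
      (star p.2 ⬝ᵥ ((X p.1 + Y p.1) *ᵥ p.2)).re
        + (star (star e₁ ⬝ᵥ p.2) * (star e₁ ⬝ᵥ ((X p.1 + Y p.1) *ᵥ p.2))).re := ⟨_, rfl⟩
  have ch : ContinuousOn h (Set.Icc ρ₀ T ×ˢ S) := by
    have : Continuous (fun q : (Matrix (Fin n) (Fin n) ℂ × Matrix (Fin n) (Fin n) ℂ) × (Fin n → ℂ) =>
      (star q.2 ⬝ᵥ ((q.1.1 + q.1.2) *ᵥ q.2)).re
        + (star (star e₁ ⬝ᵥ q.2) * (star e₁ ⬝ᵥ ((q.1.1 + q.1.2) *ᵥ q.2))).re) := by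
      fun_prop
    have h5 := this.comp_continuousOn c2
    simp only [Function.comp_def] at h5
    rw [hh]
    exact h5
  have cN : Continuous (fun v : Fin n → ℂ => (star v ⬝ᵥ v).re) := by fun_prop
  have cN2 : ContinuousOn (fun p : ℝ × (Fin n → ℂ) => (star p.2 ⬝ᵥ p.2).re)
      (Set.Icc ρ₀ T ×ˢ S) := (cN.comp continuous_snd).continuousOn
  have cdiv : ContinuousOn (fun p : ℝ × (Fin n → ℂ) => h p / (star p.2 ⬝ᵥ p.2).re)
      (Set.Icc ρ₀ T ×ˢ S) :=
    ContinuousOn.div ch cN2 fun p hp => (aux_self_pos p.2 (hS0 p.2 hp.2)).ne'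
  obtain ⟨B, hB⟩ := hC.exists_bound_of_continuousOn cdiv
  have hK : ∀ t ∈ Set.Icc ρ₀ T, ∀ v ∈ S, 0 < h (t, v) + (B + 1) * (star v ⬝ᵥ v).re := by
    intro t ht v hv
    have h1 := hB (t, v) ⟨ht, hv⟩
    have h2 := aux_self_pos _ (hS0 _ hv)
    have h3 := (abs_le.1 h1).1
    simp only at h3
    rw [le_div_iff₀ h2] at h3
    nlinarith
  generalize hKK : B + 1 = K at hK
  have main : ∀ ε > 0, ∀ t ∈ Set.Icc ρ₀ T, ∀ v ∈ S,
      0 < (star v ⬝ᵥ ((Y t - X t) *ᵥ v)).re + ε * Real.exp (K * t) * (star v ⬝ᵥ v).re := by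
    intro ε hε
    obtain ⟨f, hf⟩ : ∃ f : ℝ × (Fin n → ℂ) → ℝ, f = fun p =>
      (star p.2 ⬝ᵥ ((Y p.1 - X p.1) *ᵥ p.2)).re
        + ε * Real.exp (K * p.1) * (star p.2 ⬝ᵥ p.2).re := ⟨_, rfl⟩
    have cf : ContinuousOn f (Set.Icc ρ₀ T ×ˢ S) := by
      have h1 : Continuous (fun q : (Matrix (Fin n) (Fin n) ℂ × Matrix (Fin n) (Fin n) ℂ)
          × (Fin n → ℂ) => (star q.2 ⬝ᵥ ((q.1.2 - q.1.1) *ᵥ q.2)).re) := by fun_prop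
      have h2 : Continuous (fun p : ℝ × (Fin n → ℂ) => ε * Real.exp (K * p.1)) := by fun_prop
      rw [hf]
      have h5 := h1.comp_continuousOn c2
      simp only [Function.comp_def] at h5
      exact h5.add (h2.continuousOn.mul cN2)
    suffices hs : ∀ p ∈ Set.Icc ρ₀ T ×ˢ S, 0 < f p by
      intro t ht v hv
      have := hs (t, v) ⟨ht, hv⟩
      rwa [hf] at this
    by_contra hcon
    push Not at hcon
    obtain ⟨p₀, hp₀, hfp₀⟩ := hcon
    have hcl : IsCompact ((Set.Icc ρ₀ T ×ˢ S) ∩ f ⁻¹' Set.Iic 0) :=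
      hC.of_isClosed_subset (cf.preimage_isClosed_of_isClosed hC.isClosed isClosed_Iic)
        Set.inter_subset_left
    obtain ⟨⟨t, v⟩, ⟨⟨ht, hv⟩, hfv⟩, hmin⟩ := hcl.exists_isMinOn ⟨p₀, hp₀, hfp₀⟩
      (f := Prod.fst) continuousOn_fst
    simp only at ht hv
    have hfv : f (t, v) ≤ 0 := hfv
    have hlt : ∀ s ∈ Set.Ico ρ₀ t, ∀ w ∈ S, 0 < f (s, w) := by
      intro s hs w hw
      by_contra hle
      push Not at hle
      have : t ≤ s := hmin (a := (s, w)) ⟨⟨⟨hs.1, hs.2.le.trans ht.2⟩, hw⟩, hle⟩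
      linarith [hs.2]
    have hρt : ρ₀ < t := by
      rcases ht.1.lt_or_eq with hl | heq
      · exact hl
      · exfalso
        subst heq
        have h1 := (Complex.nonneg_iff.1
          ((hinit ρ₀ ⟨hρ₀.1, le_rfl⟩).dotProduct_mulVec_nonneg v)).1
        have h2 := aux_self_pos _ (hS0 _ hv)
        have h3 : 0 < ε * Real.exp (K * ρ₀) * (star v ⬝ᵥ v).re := by positivity
        rw [hf] at hfv
        simp only at hfv
        linarith
    have htT := hsub ht
    have hge : ∀ w ∈ S, 0 ≤ f (t, w) := by
      intro w hw
      have hc : ContinuousWithinAt (fun s => f (s, w)) (Set.Ioo ρ₀ t) t := by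
        have h1 : ContinuousOn (fun s => f (s, w)) (Set.Icc ρ₀ T) :=
          cf.comp (by fun_prop) fun s hs => ⟨hs, hw⟩
        exact (h1 t ht).mono fun s hs => ⟨hs.1.le, hs.2.le.trans ht.2⟩
      have : (nhdsWithin t (Set.Ioo ρ₀ t)).NeBot := right_nhdsWithin_Ioo_neBot hρt
      refine ge_of_tendsto hc ?_
      filter_upwards [self_mem_nhdsWithin] with s hs
      exact (hlt s ⟨hs.1.le, hs.2⟩ w hw).le
    obtain ⟨c, hc⟩ : ∃ c : ℝ, c = ε * Real.exp (K * t) := ⟨_, rfl⟩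
    have hcpos : 0 < c := by rw [hc]; positivity
    have hform : ∀ w, (star w ⬝ᵥ ((Y t - X t + (c : ℂ) • 1) *ᵥ w)).re = f (t, w) := by
      intro w
      rw [hf, add_mulVec, smul_mulVec, one_mulVec, dotProduct_add, dotProduct_smul, smul_eq_mul,
        Complex.add_re, Complex.re_ofReal_mul, hc]
    have hHerm : (Y t - X t + (c : ℂ) • (1 : Matrix (Fin n) (Fin n) ℂ)).IsHermitian := by
      refine ((hHermY t htT).sub (hHermX t htT)).add ?_
      rw [IsHermitian, conjTranspose_smul, conjTranspose_one]
      simp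
    have hpsd : (Y t - X t + (c : ℂ) • (1 : Matrix (Fin n) (Fin n) ℂ)).PosSemidef := by
      refine aux_psd _ hHerm (aux_psd_sphere _ fun w hw => ?_)
      rw [hform]
      exact hge w hw
    have hker : (Y t - X t + (c : ℂ) • (1 : Matrix (Fin n) (Fin n) ℂ)) *ᵥ v = 0 := by
      refine (hpsd.dotProduct_mulVec_zero_iff v).1 ?_
      apply Complex.ext
      · rw [hform]
        exact le_antisymm hfv (hge v hv)
      · exact hHerm.im_star_dotProduct_mulVec_self v
    have hYv : Y t *ᵥ v = X t *ᵥ v - (c : ℂ) • v := by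
      rw [add_mulVec, sub_mulVec, smul_mulVec, one_mulVec] at hker
      rw [← sub_eq_zero, ← hker]
      abel
    have halg := aux_alg (X t) (Y t) (hHermX t htT) (hHermY t htT) e₁ v c hYv
    have hI := (Complex.nonneg_iff.1 ((hineq t htT).dotProduct_mulVec_nonneg v)).1
    rw [add_assoc, add_assoc, sub_mulVec, add_mulVec (Y' t), add_mulVec (X' t), dotProduct_sub,
      dotProduct_add, dotProduct_add, Complex.sub_re, Complex.add_re, Complex.add_re] at hI
    have hsub2 : Set.Ioo ρ₀ t ⊆ Set.Ioc 0 T :=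
      fun s hs => ⟨hρ₀.1.trans hs.1, hs.2.le.trans ht.2⟩
    have hd1 := aux_deriv (fun s => Y s - X s) (Y' t - X' t) (Set.Ioo ρ₀ t) t v
      fun i j => ((hY t htT i j).mono hsub2).sub ((hX t htT i j).mono hsub2)
    have hd2 : HasDerivAt (fun s : ℝ => ε * Real.exp (K * s) * (star v ⬝ᵥ v).re)
        (ε * (Real.exp (K * t) * K) * (star v ⬝ᵥ v).re) t := by
      have h1 : HasDerivAt (fun s : ℝ => K * s) K t := by
        simpa using (hasDerivAt_id t).const_mul K
      exact (h1.exp.const_mul ε).mul_const _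
    have hd := hd1.add hd2.hasDerivWithinAt
    have hle := aux_slope _ _ ρ₀ t hρt hd (by rw [hf] at hfv; exact hfv) (by
      intro s hs
      have := (hlt s ⟨hs.1.le, hs.2⟩ v hv).le
      rw [hf] at this
      exact this)
    have hKt := hK t ht v hv
    rw [hh] at hKt
    simp only at hKt
    rw [sub_mulVec, dotProduct_sub, Complex.sub_re] at hle
    have hprod := mul_pos hcpos hKt
    have hre : ε * (Real.exp (K * t) * K) * (star v ⬝ᵥ v).re = c * (K * (star v ⬝ᵥ v).re) := by
      rw [hc]; ring
    rw [hre] at hle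
    linarith
  intro ρ hρ
  rcases le_total ρ ρ₀ with hle | hle
  · exact hinit ρ ⟨hρ.1, hle⟩
  refine aux_psd _ ((hHermY ρ hρ).sub (hHermX ρ hρ)) (aux_psd_sphere _ fun v hv => ?_)
  have hN := aux_self_pos _ (hS0 _ hv)
  refine le_of_forall_pos_le_add fun δ hδ => ?_
  have h1 : 0 < Real.exp (K * ρ) * (star v ⬝ᵥ v).re := by positivity
  have := main (δ / (Real.exp (K * ρ) * (star v ⬝ᵥ v).re)) (by positivity) ρ ⟨hle, hρ.2⟩ v hv
  rw [mul_assoc, div_mul_cancel₀ _ h1.ne'] at this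
  exact this.le
end

section
/- Let n ≥ 1 and A₁, A₂, K ≥ 0 be real numbers, and set c = (4√n + 3)·A₁² + 2·A₂ + K. Let A ∈ M_n(ℂ) be a matrix such that A + A* + √2·A₁·I is positive semidefinite. Then for every ρ > 0 the matrix ( −1/ρ² + (1/ρ + √c)² )·I + (1/ρ + √c)·(A + A*) − ( (2√n + 1/2)·A₁² + A₂ + K/2 )·I is positive semidefinite. -/
open Matrix ComplexOrder

/-- Key algebraic step of the Hessian comparison: `Y(ρ) = (1/ρ + √c)·I` with
`c = (4√n + 3)A₁² + 2A₂ + K` is a supersolution of the matrix Riccati inequality,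
provided `A + Aᴴ + √2·A₁·I` is positive semidefinite. -/
theorem supersolution_hessian_comparison (n : ℕ) (hn : 1 ≤ n)
    (A₁ A₂ K : ℝ) (hA₁ : 0 ≤ A₁) (hA₂ : 0 ≤ A₂) (hK : 0 ≤ K)
    (A : Matrix (Fin n) (Fin n) ℂ)
    (hA : (A + Aᴴ + (Real.sqrt 2 * A₁) • (1 : Matrix (Fin n) (Fin n) ℂ)).PosSemidef)
    (ρ : ℝ) (hρ : 0 < ρ) :
    ((-1 / ρ ^ 2 +
        (1 / ρ + Real.sqrt ((4 * Real.sqrt n + 3) * A₁ ^ 2 + 2 * A₂ + K)) ^ 2) •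
          (1 : Matrix (Fin n) (Fin n) ℂ)
      + (1 / ρ + Real.sqrt ((4 * Real.sqrt n + 3) * A₁ ^ 2 + 2 * A₂ + K)) • (A + Aᴴ)
      - ((2 * Real.sqrt n + 1 / 2) * A₁ ^ 2 + A₂ + K / 2) •
          (1 : Matrix (Fin n) (Fin n) ℂ)).PosSemidef := by
  have hsn : 0 ≤ Real.sqrt n := Real.sqrt_nonneg _
  have hc0 : 0 ≤ (4 * Real.sqrt n + 3) * A₁ ^ 2 + 2 * A₂ + K := by positivity
  have hss := Real.sq_sqrt hc0
  have hs0 := Real.sqrt_nonneg ((4 * Real.sqrt n + 3) * A₁ ^ 2 + 2 * A₂ + K)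
  set s := Real.sqrt ((4 * Real.sqrt n + 3) * A₁ ^ 2 + 2 * A₂ + K) with hs
  have h2 : Real.sqrt 2 ^ 2 = 2 := Real.sq_sqrt (by norm_num)
  have ha0 : 0 ≤ Real.sqrt 2 * A₁ := by positivity
  have ha2 : (Real.sqrt 2 * A₁) ^ 2 = 2 * A₁ ^ 2 := by rw [mul_pow, h2]
  set a := Real.sqrt 2 * A₁ with ha
  have hle : a ≤ s := by
    refine abs_le_of_sq_le_sq' ?_ hs0 |>.2
    have h3 : 0 ≤ Real.sqrt n * A₁ ^ 2 := by positivity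
    nlinarith [sq_nonneg A₁]
  have ht : 0 < 1 / ρ := by positivity
  have hr : -1 / ρ ^ 2 = -(1 / ρ) ^ 2 := by field_simp
  rw [hr]
  set t := 1 / ρ with htdef
  have hq : 0 ≤ -t ^ 2 + (t + s) ^ 2 - (t + s) * a
      - ((2 * Real.sqrt n + 1 / 2) * A₁ ^ 2 + A₂ + K / 2) := by
    have h4 : 0 ≤ t * (2 * s - a) := mul_nonneg ht.le (by linarith)
    nlinarith [sq_nonneg (s - a)]
  have key := (hA.smul (show 0 ≤ t + s by positivity)).add
    ((PosSemidef.one (n := Fin n) (R := ℂ)).smul hq)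
  convert key using 1
  module
end

section
/- Analytic form of the Hessian comparison: Let n ≥ 1, A₁, A₂, K ≥ 0, and set c = (4√n + 3)·A₁² + 2·A₂ + K. Let T > 0, let X : (0, T] → M_n(ℂ) be continuously differentiable with X(ρ) Hermitian for every ρ, and let A : (0, T] → M_n(ℂ) be continuous with A(ρ) + A(ρ)* + √2·A₁·I positive semidefinite for every ρ. Assume that ( (2√n + 1/2)·A₁² + A₂ + K/2 )·I − ( X'(ρ) + X(ρ)² + A(ρ)X(ρ) + X(ρ)A(ρ)* ) is positive semidefinite for all ρ ∈ (0, T], and that there exists ρ₀ ∈ (0, T] with (1/ρ + (√2/2)·A₁)·I − X(ρ) positive semidefinite for all ρ ∈ (0, ρ₀]. Then (1/ρ + √c)·I − X(ρ) is positive semidefinite for all ρ ∈ (0, T]. -/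
open Matrix ComplexOrder

namespace HCA

noncomputable def q {n : ℕ} (M : Matrix (Fin n) (Fin n) ℂ) (v : Fin n → ℂ) : ℝ :=
  (star v ⬝ᵥ M *ᵥ v).re

variable {n : ℕ}

lemma q_add (M N : Matrix (Fin n) (Fin n) ℂ) (v) : q (M + N) v = q M v + q N v := by
  simp [q, add_mulVec, dotProduct_add]

lemma q_sub (M N : Matrix (Fin n) (Fin n) ℂ) (v) : q (M - N) v = q M v - q N v := by
  simp [q, sub_mulVec, dotProduct_sub]

lemma q_smul (r : ℝ) (M : Matrix (Fin n) (Fin n) ℂ) (v) : q (r • M) v = r * q M v := by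
  simp [q, smul_mulVec, dotProduct_smul]

lemma q_one_pos (v : Fin n → ℂ) (hv : v ≠ 0) : 0 < q 1 v := by
  have h := (Matrix.PosDef.one (n := Fin n) (R := ℂ)).dotProduct_mulVec_pos hv
  exact (Complex.lt_def.1 h).1

lemma q_nonneg {M : Matrix (Fin n) (Fin n) ℂ} (h : M.PosSemidef) (v) : 0 ≤ q M v :=
  (Complex.le_def.1 (h.dotProduct_mulVec_nonneg v)).1

lemma q_scale (M : Matrix (Fin n) (Fin n) ℂ) (v) (r : ℝ) : q M (r • v) = r ^ 2 * q M v := by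
  simp [q, mulVec_smul, dotProduct_smul, smul_dotProduct, star_smul]
  ring

lemma psd_of_q {M : Matrix (Fin n) (Fin n) ℂ} (h : M.IsHermitian)
    (hq : ∀ v : Fin n → ℂ, ‖v‖ = 1 → 0 ≤ q M v) : M.PosSemidef := by
  refine Matrix.PosSemidef.of_dotProduct_mulVec_nonneg h fun v => ?_
  rw [Complex.le_def]
  refine ⟨?_, ?_⟩
  · change 0 ≤ q M v
    by_cases hv : v = 0
    · subst hv; simp [q]
    · have hn : 0 < ‖v‖ := norm_pos_iff.2 hv
      have h1 := hq (‖v‖⁻¹ • v) (by rw [norm_smul]; simp [hn.ne'])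
      rw [q_scale] at h1
      exact nonneg_of_mul_nonneg_right h1 (by positivity)
  · have := h.im_star_dotProduct_mulVec_self v
    simpa using this.symm

lemma q_expand (M : Matrix (Fin n) (Fin n) ℂ) (v) :
    q M v = ∑ i, ∑ j, (star (v i) * (M i j * v j)).re := by
  simp [q, dotProduct, mulVec, Finset.mul_sum]

lemma q_conjTranspose (M : Matrix (Fin n) (Fin n) ℂ) (v) : q Mᴴ v = q M v := by
  have : star v ⬝ᵥ Mᴴ *ᵥ v = star (star v ⬝ᵥ M *ᵥ v) := by
    rw [Matrix.star_dotProduct, star_mulVec, conjTranspose_conjTranspose, ← dotProduct_mulVec]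
  rw [q, this]; simp [q]

lemma q_mul_right (A X : Matrix (Fin n) (Fin n) ℂ) (v) (f : ℝ) (h : X *ᵥ v = f • v) :
    q (A * X) v = f * q A v := by
  rw [q, ← mulVec_mulVec, h, mulVec_smul, dotProduct_smul]; simp [q]

lemma q_mul_left (A X : Matrix (Fin n) (Fin n) ℂ) (v) (f : ℝ) (hX : X.IsHermitian)
    (h : X *ᵥ v = f • v) :
    q (X * Aᴴ) v = f * q A v := by
  rw [← q_mul_right A X v f h, ← q_conjTranspose (A * X), conjTranspose_mul, hX.eq]

lemma scalar_ineq (M A₁ c s r : ℝ) (hA₁ : 0 ≤ A₁) (hM : 0 ≤ M)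
    (hc : c = 2 * M + 2 * A₁ ^ 2) (hs : Real.sqrt c < s) (hr : 0 < r) :
    M - (1 / r + s) ^ 2 + Real.sqrt 2 * A₁ * (1 / r + s) < - (1 / r ^ 2) := by
  have hc0 : 0 ≤ c := by rw [hc]; positivity
  have hs0 : 0 < s := (Real.sqrt_nonneg c).trans_lt hs
  have hcs : c < s ^ 2 := (Real.sqrt_lt' hs0).1 hs
  have h2 : Real.sqrt 2 ^ 2 = 2 := Real.sq_sqrt (by norm_num)
  set w := Real.sqrt 2 * A₁ with hw
  have hw2 : w ^ 2 = 2 * A₁ ^ 2 := by rw [hw, mul_pow, h2]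
  have hw0 : 0 ≤ w := by positivity
  have hws : w < s := by nlinarith
  have h1r : 0 < 1 / r := by positivity
  have e : 1 / r ^ 2 = (1 / r) ^ 2 := by ring
  rw [e]
  set u := 1 / r
  nlinarith [mul_pos h1r hs0, mul_pos h1r (sub_pos.2 hws), sq_nonneg (s - w)]

end HCA

open HCA

/-- Analytic form of the Hessian comparison for almost Hermitian manifolds: if the
Hermitian-matrix-valued `C¹` function `X` satisfies the matrix Riccati inequality
`X' + X² + AX + XAᴴ ≤ ((2√n + 1/2)A₁² + A₂ + K/2)·I` on `(0, T]`, where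
`A + Aᴴ + √2·A₁·I ⪰ 0`, and `X ρ ≤ (1/ρ + (√2/2)A₁)·I` near `0`, then
`X ρ ≤ (1/ρ + √c)·I` on `(0, T]` with `c = (4√n + 3)A₁² + 2A₂ + K`. -/
theorem hessian_comparison_analytic (n : ℕ) (hn : 1 ≤ n)
    (A₁ A₂ K : ℝ) (hA₁ : 0 ≤ A₁) (hA₂ : 0 ≤ A₂) (hK : 0 ≤ K)
    (T : ℝ) (hT : 0 < T)
    (X X' A : ℝ → Matrix (Fin n) (Fin n) ℂ)
    (hX : ∀ ρ ∈ Set.Ioc 0 T, ∀ i j,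
      HasDerivWithinAt (fun t => X t i j) (X' ρ i j) (Set.Ioc 0 T) ρ)
    (hX' : ∀ i j, ContinuousOn (fun ρ => X' ρ i j) (Set.Ioc 0 T))
    (hHerm : ∀ ρ ∈ Set.Ioc 0 T, (X ρ).IsHermitian)
    (hAcont : ∀ i j, ContinuousOn (fun ρ => A ρ i j) (Set.Ioc 0 T))
    (hA : ∀ ρ ∈ Set.Ioc 0 T,
      (A ρ + (A ρ)ᴴ + (Real.sqrt 2 * A₁) • (1 : Matrix (Fin n) (Fin n) ℂ)).PosSemidef)
    (hineq : ∀ ρ ∈ Set.Ioc 0 T,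
      (((2 * Real.sqrt n + 1 / 2) * A₁ ^ 2 + A₂ + K / 2) •
          (1 : Matrix (Fin n) (Fin n) ℂ)
        - (X' ρ + X ρ ^ 2 + A ρ * X ρ + X ρ * (A ρ)ᴴ)).PosSemidef)
    (hinit : ∃ ρ₀ ∈ Set.Ioc 0 T, ∀ ρ ∈ Set.Ioc 0 ρ₀,
      ((1 / ρ + Real.sqrt 2 / 2 * A₁) • (1 : Matrix (Fin n) (Fin n) ℂ) - X ρ).PosSemidef) :
    ∀ ρ ∈ Set.Ioc 0 T,
      ((1 / ρ + Real.sqrt ((4 * Real.sqrt n + 3) * A₁ ^ 2 + 2 * A₂ + K)) •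
          (1 : Matrix (Fin n) (Fin n) ℂ) - X ρ).PosSemidef := by
  set c := (4 * Real.sqrt n + 3) * A₁ ^ 2 + 2 * A₂ + K with hc
  set M := (2 * Real.sqrt n + 1 / 2) * A₁ ^ 2 + A₂ + K / 2 with hM
  have hM0 : 0 ≤ M := by positivity
  have hcM : c = 2 * M + 2 * A₁ ^ 2 := by rw [hc, hM]; ring
  have hherm : ∀ ρ ∈ Set.Ioc 0 T, ∀ f : ℝ,
      (f • (1 : Matrix (Fin n) (Fin n) ℂ) - X ρ).IsHermitian := by
    intro ρ hρ f
    refine Matrix.IsHermitian.sub ?_ (hHerm ρ hρ)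
    simp [Matrix.IsHermitian, conjTranspose_smul]
  obtain ⟨ρ₀, hρ₀, hini⟩ := hinit
  have hb : Real.sqrt 2 / 2 * A₁ ≤ Real.sqrt c := by
    apply Real.le_sqrt_of_sq_le
    have h2 : Real.sqrt 2 ^ 2 = 2 := Real.sq_sqrt (by norm_num)
    rw [mul_pow, div_pow, h2]
    nlinarith [sq_nonneg A₁]
  have key : ∀ s, Real.sqrt c < s → ∀ ρ ∈ Set.Ioc 0 T, ∀ v : Fin n → ℂ, ‖v‖ = 1 →
      0 < (1 / ρ + s) * q 1 v - q (X ρ) v := by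
    intro s hs
    have hs0 : 0 < s := (Real.sqrt_nonneg c).trans_lt hs
    have hsmall : ∀ ρ ∈ Set.Ioc 0 ρ₀, ∀ v : Fin n → ℂ, ‖v‖ = 1 →
        0 < (1 / ρ + s) * q 1 v - q (X ρ) v := by
      intro ρ hρ v hv
      have h1 := q_nonneg (hini ρ hρ) v
      rw [q_sub, q_smul] at h1
      have h2 := q_one_pos v (by rintro rfl; simp at hv)
      nlinarith
    by_contra! hcon
    obtain ⟨ρb, hρb, vb, hvb, hgb⟩ := hcon
    have hρb0 : ρ₀ ≤ ρb := by
      by_contra! hlt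
      exact absurd (hsmall ρb ⟨hρb.1, hlt.le⟩ vb hvb) (not_lt.2 hgb)
    have hsub : Set.Icc ρ₀ T ⊆ Set.Ioc 0 T := fun x hx => ⟨hρ₀.1.trans_le hx.1, hx.2⟩
    let S : Set (ℝ × (Fin n → ℂ)) := Set.Icc ρ₀ T ×ˢ Metric.sphere 0 1
    let g : ℝ × (Fin n → ℂ) → ℝ := fun p => (1 / p.1 + s) * q 1 p.2 - q (X p.1) p.2
    have hS : IsCompact S := isCompact_Icc.prod (isCompact_sphere _ _)
    have hXc : ∀ i j, ContinuousOn (fun t => X t i j) (Set.Icc ρ₀ T) := fun i j x hx =>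
      ((hX x (hsub hx) i j).continuousWithinAt).mono hsub
    have hg : ContinuousOn g S := by
      have hfst : ContinuousOn (fun p : ℝ × (Fin n → ℂ) => 1 / p.1 + s) S := by
        refine ContinuousOn.add (ContinuousOn.div continuousOn_const continuousOn_fst ?_)
          continuousOn_const
        intro p hp
        exact (hsub hp.1).1.ne'
      have hq1 : ContinuousOn (fun p : ℝ × (Fin n → ℂ) => q 1 p.2) S := by
        apply Continuous.continuousOn
        simp only [q_expand]
        fun_prop
      refine (hfst.mul hq1).sub ?_
      simp only [q_expand]
      refine continuousOn_finsetSum _ fun i _ => continuousOn_finsetSum _ fun j _ => ?_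
      refine Complex.continuous_re.comp_continuousOn (ContinuousOn.mul (by fun_prop)
        (ContinuousOn.mul ?_ (by fun_prop)))
      exact (hXc i j).comp continuousOn_fst (fun p hp => hp.1)
    have hZ : IsCompact (S ∩ g ⁻¹' Set.Iic 0) :=
      hS.of_isClosed_subset (hg.preimage_isClosed_of_isClosed hS.isClosed isClosed_Iic)
        Set.inter_subset_left
    obtain ⟨⟨r, v⟩, ⟨⟨hr, hv⟩, hgr⟩, hmin⟩ := hZ.exists_isMinOn
      ⟨(ρb, vb), ⟨⟨hρb0, hρb.2⟩, by simpa using hvb⟩, hgb⟩ (continuous_fst.continuousOn)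
    simp only [isMinOn_iff] at hmin
    have hr' := hsub hr
    have hv1 : ‖v‖ = 1 := by simpa using hv
    have hv0 : v ≠ 0 := by rintro rfl; simp at hv1
    have hgr' : (1 / r + s) * q 1 v - q (X r) v ≤ 0 := hgr
    have hrlt : ρ₀ < r := by
      refine lt_of_le_of_ne hr.1 ?_
      rintro rfl
      exact absurd (hsmall ρ₀ ⟨hρ₀.1, le_rfl⟩ v hv1) (not_lt.2 hgr')
    have hpos : ∀ t ∈ Set.Ico ρ₀ r, ∀ w : Fin n → ℂ, ‖w‖ = 1 →
        0 < (1 / t + s) * q 1 w - q (X t) w := by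
      intro t ht w hw
      by_contra! hle
      have := hmin (t, w) ⟨⟨⟨ht.1, ht.2.le.trans hr.2⟩, by simpa using hw⟩, hle⟩
      exact absurd ht.2 (not_lt.2 this)
    -- derivative
    have hder : ∀ w : Fin n → ℂ, HasDerivWithinAt
        (fun t => (1 / t + s) * q 1 w - q (X t) w)
        (-(1 / r ^ 2) * q 1 w - q (X' r) w) (Set.Ico ρ₀ r) r := by
      intro w
      have hsub2 : Set.Ico ρ₀ r ⊆ Set.Ioc 0 T :=
        fun x hx => hsub ⟨hx.1, hx.2.le.trans hr.2⟩
      have h1 : HasDerivWithinAt (fun t : ℝ => 1 / t + s) (-(1 / r ^ 2)) (Set.Ico ρ₀ r) r := by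
        have := ((hasDerivAt_inv hr'.1.ne').add_const s).hasDerivWithinAt (s := Set.Ico ρ₀ r)
        simpa [one_div] using this
      refine (h1.mul_const _).sub ?_
      simp only [q_expand]
      refine HasDerivWithinAt.fun_sum fun i _ => HasDerivWithinAt.fun_sum fun j _ => ?_
      have h3 := ((((hX r hr' i j).mono hsub2).mul_const (w j)).const_mul (star (w i)))
      exact (Complex.reCLM.hasFDerivAt.comp_hasDerivWithinAt r h3)
    have hcl : (nhdsWithin r (Set.Ico ρ₀ r)).NeBot := by
      rw [← mem_closure_iff_nhdsWithin_neBot, closure_Ico hrlt.ne]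
      exact ⟨hrlt.le, le_rfl⟩
    have hnn : ∀ w : Fin n → ℂ, ‖w‖ = 1 → 0 ≤ (1 / r + s) * q 1 w - q (X r) w := by
      intro w hw
      refine ge_of_tendsto (hder w).continuousWithinAt ?_
      filter_upwards [self_mem_nhdsWithin] with t ht using (hpos t ht w hw).le
    have hzero : (1 / r + s) * q 1 v - q (X r) v = 0 := le_antisymm hgr' (hnn v hv1)
    have hpsd : ((1 / r + s) • (1 : Matrix (Fin n) (Fin n) ℂ) - X r).PosSemidef := by
      refine psd_of_q (hherm r hr' _) fun w hw => ?_
      rw [q_sub, q_smul]; exact hnn w hw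
    have heig : X r *ᵥ v = (1 / r + s) • v := by
      have h1 : ((1 / r + s) • (1 : Matrix (Fin n) (Fin n) ℂ) - X r) *ᵥ v = 0 := by
        refine (hpsd.dotProduct_mulVec_zero_iff v).1 ?_
        apply Complex.ext
        · change q _ v = 0
          rw [q_sub, q_smul]; exact hzero
        · exact hpsd.1.im_star_dotProduct_mulVec_self v
      rw [sub_mulVec, smul_mulVec, one_mulVec, sub_eq_zero] at h1
      exact h1.symm
    have hle : -(1 / r ^ 2) * q 1 v - q (X' r) v ≤ 0 := by
      have ht := (hasDerivWithinAt_iff_tendsto_slope.1 (hder v))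
      rw [Set.sdiff_singleton_eq_self (by simp)] at ht
      refine le_of_tendsto ht ?_
      filter_upwards [self_mem_nhdsWithin] with t ht
      rw [slope_def_field, hzero, sub_zero]
      exact div_nonpos_of_nonneg_of_nonpos (hpos t ht v hv1).le (by linarith [ht.2])
    have hN := q_one_pos v hv0
    have hf : 0 < 1 / r + s := by have := hr'.1; positivity
    have h1 := q_nonneg (hineq r hr') v
    have h2 := q_nonneg (hA r hr') v
    have hsq : q (X r ^ 2) v = (1 / r + s) ^ 2 * q 1 v := by
      have h3 := q_mul_right 1 (X r) v _ heig
      rw [one_mul] at h3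
      rw [pow_two, q_mul_right _ _ v _ heig, h3]; ring
    rw [q_sub, q_smul, q_add, q_add, q_add, hsq, q_mul_right _ _ v _ heig,
      q_mul_left _ _ v _ (hHerm r hr') heig] at h1
    rw [q_add, q_add, q_smul, q_conjTranspose] at h2
    have h4 := scalar_ineq M A₁ c s r hA₁ hM0 hcM hs hr'.1
    have h5 := mul_lt_mul_of_pos_right h4 hN
    have h6 := mul_nonneg hf.le h2
    nlinarith
  intro ρ hρ
  refine psd_of_q (hherm ρ hρ _) fun v hv => ?_
  rw [q_sub, q_smul]
  have hN := q_one_pos v (by rintro rfl; simp at hv)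
  by_contra! hneg
  set d := (1 / ρ + Real.sqrt c) * q 1 v - q (X ρ) v with hd
  have h := key (Real.sqrt c + (-d) / q 1 v) (by
    have : 0 < (-d) / q 1 v := div_pos (by linarith) hN
    linarith) ρ hρ v hv
  have e : (1 / ρ + (Real.sqrt c + (-d) / q 1 v)) * q 1 v - q (X ρ) v = d + -d := by
    rw [hd]; field_simp; ring
  rw [e] at h
  simp at h
end

section
/- Analytic form of the nearly Kähler Hessian comparison for K > 0: Let K > 0, n ≥ 1, and 0 < T < π/√(2K). Let X : (0, T] → M_n(ℂ) be continuously differentiable with X(ρ) Hermitian for every ρ, and let e₁ ∈ ℂⁿ be the first standard basis vector. Let Y(ρ) be the diagonal matrix with first entry (√(2K)/2)·cot(√(2K)·ρ) and remaining diagonal entries √(K/2)·cot(√(K/2)·ρ). Assume that D(ρ) − ( X'(ρ) + X(ρ)² + (X(ρ)e₁)(X(ρ)e₁)* ) is positive semidefinite for all ρ ∈ (0, T], where D(ρ) is the constant diagonal matrix with first entry −K and remaining entries −K/2, and that there exists ρ₀ ∈ (0, T] with Y(ρ) − X(ρ) positive semidefinite for all ρ ∈ (0, ρ₀]. Then Y(ρ)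 − X(ρ) is positive semidefinite for every ρ ∈ (0, T]. -/
open Matrix ComplexOrder

theorem nk_core (n : ℕ) (T : ℝ) (c α d : Fin n → ℝ) (hα : ∀ j, 0 < α j)
    (hd : ∀ j, d j = -(c j ^ 2 / α j))
    (hs : ∀ ρ ∈ Set.Ioc 0 T, ∀ j, 0 < Real.sin (c j * ρ))
    (X X' : ℝ → Matrix (Fin n) (Fin n) ℂ)
    (Y : ℝ → Matrix (Fin n) (Fin n) ℂ)
    (hY : Y = fun ρ => Matrix.diagonal (fun j : Fin n =>
      ((c j / α j * (Real.cos (c j * ρ) / Real.sin (c j * ρ)) : ℝ) : ℂ)))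
    (hX : ∀ ρ ∈ Set.Ioc 0 T, ∀ i j,
      HasDerivWithinAt (fun t => X t i j) (X' ρ i j) (Set.Ioc 0 T) ρ)
    (hHerm : ∀ ρ ∈ Set.Ioc 0 T, (X ρ).IsHermitian)
    (hineq : ∀ ρ ∈ Set.Ioc 0 T,
      (Matrix.diagonal (fun j => (d j : ℂ)) -
        (X' ρ + X ρ * Matrix.diagonal (fun j => (α j : ℂ)) * X ρ)).PosSemidef)
    (hinit : ∃ ρ₀ ∈ Set.Ioc 0 T, ∀ ρ ∈ Set.Ioc 0 ρ₀, (Y ρ - X ρ).PosSemidef) :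
    ∀ ρ ∈ Set.Ioc 0 T, (Y ρ - X ρ).PosSemidef := by
  obtain ⟨ρ₀, hρ₀, h0⟩ := hinit
  intro ρ hρ
  rcases le_total ρ ρ₀ with hle | hle
  · exact h0 ρ ⟨hρ.1, hle⟩
  set A : Matrix (Fin n) (Fin n) ℂ := Matrix.diagonal (fun j => (α j : ℂ)) with hA
  set D : Matrix (Fin n) (Fin n) ℂ := Matrix.diagonal (fun j => (d j : ℂ)) with hD
  set M : ℝ → Matrix (Fin n) (Fin n) ℂ :=
    fun t => Matrix.diagonal (fun j => ((Real.sin (c j * t) : ℝ) : ℂ)) with hM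
  have hMH : ∀ t, (M t)ᴴ = M t := by
    intro t
    ext i j
    simp only [hM, Matrix.diagonal_conjTranspose]
    congr 1
    congr 1
    ext j
    simp only [Pi.star_apply, Complex.star_def, Complex.conj_ofReal]
  have hYH : ∀ t, (Y t).IsHermitian := by
    intro t
    simp only [hY, Matrix.IsHermitian, Matrix.diagonal_conjTranspose]
    congr 1
    ext j
    simp only [Pi.star_apply, Complex.star_def, Complex.conj_ofReal]
  have hApsd : A.PosSemidef := by
    rw [hA, Matrix.posSemidef_diagonal_iff]
    intro j
    exact_mod_cast (hα j).le
  -- derivative matrix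
  set W : ℝ → Matrix (Fin n) (Fin n) ℂ := fun t =>
    M t * (D - Y t * A * Y t - X' t + Y t * A * (Y t - X t) + (Y t - X t) * A * Y t) * M t with hW
  have hWpsd : ∀ t ∈ Set.Ioc 0 T, (W t).PosSemidef := by
    intro t ht
    have e : D - Y t * A * Y t - X' t + Y t * A * (Y t - X t) + (Y t - X t) * A * Y t
        = (D - (X' t + X t * A * X t)) + (Y t - X t)ᴴ * A * (Y t - X t) := by
      rw [((hYH t).sub (hHerm t ht)).eq]
      noncomm_ring
    have h1 := (hineq t ht).add (hApsd.conjTranspose_mul_mul_same (Y t - X t))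
    rw [← e] at h1
    have h2 := h1.conjTranspose_mul_mul_same (M t)
    rw [hMH] at h2
    exact h2
  have hder : ∀ t ∈ Set.Ioc 0 T, ∀ i j,
      HasDerivWithinAt (fun t => (M t * (Y t - X t) * M t) i j) (W t i j) (Set.Ioc 0 T) t := by
    intro t ht i j
    have hsin : ∀ j, HasDerivAt (fun t : ℝ => ((Real.sin (c j * t) : ℝ) : ℂ))
        ((Real.cos (c j * t) * c j : ℝ) : ℂ) t := by
      intro j
      have h := ((hasDerivAt_id t).const_mul (c j)).sin
      simp only [id, mul_one] at h
      exact h.ofReal_comp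
    have hy : ∀ j, HasDerivAt (fun t : ℝ =>
        ((c j / α j * (Real.cos (c j * t) / Real.sin (c j * t)) : ℝ) : ℂ))
        ((d j - α j * (c j / α j * (Real.cos (c j * t) / Real.sin (c j * t))) ^ 2 : ℝ) : ℂ) t := by
      intro j
      have hsn := (hs t ht j).ne'
      have h1 := ((hasDerivAt_id t).const_mul (c j)).sin
      have h2 := ((hasDerivAt_id t).const_mul (c j)).cos
      simp only [id, mul_one] at h1 h2
      have h := ((h2.div h1 hsn).const_mul (c j / α j)).ofReal_comp
      refine h.congr_deriv ?_
      congr 1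
      rw [hd]
      have := (hα j).ne'
      field_simp
    have hYd : HasDerivWithinAt (fun t => Y t i j) ((D - Y t * A * Y t) i j) (Set.Ioc 0 T) t := by
      by_cases hij : i = j
      · subst hij
        have h := (hy i).hasDerivWithinAt (s := Set.Ioc 0 T)
        simp only [hY, hD, hA, Matrix.diagonal_mul_diagonal, Matrix.sub_apply,
          Matrix.diagonal_apply_eq]
        refine h.congr_deriv ?_
        push_cast
        ring
      · simp only [hY, hD, hA, Matrix.diagonal_mul_diagonal, Matrix.sub_apply,
          Matrix.diagonal_apply_ne _ hij, sub_zero]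
        exact hasDerivWithinAt_const _ _ _
    have hZ := hYd.sub (hX t ht i j)
    have h := (((hsin i).hasDerivWithinAt (s := Set.Ioc 0 T)).mul hZ).mul
      ((hsin j).hasDerivWithinAt (s := Set.Ioc 0 T))
    have hfun : (fun t => (M t * (Y t - X t) * M t) i j) = fun t =>
        ((Real.sin (c i * t) : ℝ) : ℂ) * (Y t i j - X t i j) * ((Real.sin (c j * t) : ℝ) : ℂ) := by
      ext t
      simp only [hM, Matrix.mul_diagonal, Matrix.diagonal_mul, Matrix.sub_apply]
    rw [hfun]
    refine h.congr_deriv ?_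
    have hml : ∀ j, ((Real.cos (c j * t) * c j : ℝ) : ℂ) = ((Real.sin (c j * t) : ℝ) : ℂ) *
        (((c j / α j * (Real.cos (c j * t) / Real.sin (c j * t)) : ℝ) : ℂ) * (α j : ℂ)) := by
      intro j
      rw [← Complex.ofReal_mul, ← Complex.ofReal_mul]
      congr 1
      have := (hα j).ne'
      have hsn := (hs t ht j).ne'
      field_simp
    have e1 : (Y t * A * (Y t - X t)) i j =
        ((c i / α i * (Real.cos (c i * t) / Real.sin (c i * t)) : ℝ) : ℂ) * (α i : ℂ)
          * (Y t i j - X t i j) := by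
      rw [← Matrix.sub_apply]
      generalize Y t - X t = Z
      simp only [hY, hA, Matrix.diagonal_mul_diagonal, Matrix.diagonal_mul]
    have e2 : ((Y t - X t) * A * Y t) i j =
        (Y t i j - X t i j) * (((c j / α j * (Real.cos (c j * t) / Real.sin (c j * t)) : ℝ) : ℂ)
          * (α j : ℂ)) := by
      rw [← Matrix.sub_apply]
      generalize Y t - X t = Z
      simp only [hY, hA, Matrix.mul_diagonal]
      ring
    have e3 : W t i j = ((Real.sin (c i * t) : ℝ) : ℂ) * ((D - Y t * A * Y t) i j - X' t i j
        + (Y t * A * (Y t - X t)) i j + ((Y t - X t) * A * Y t) i j)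
        * ((Real.sin (c j * t) : ℝ) : ℂ) := by
      simp only [hW, hM, Matrix.mul_diagonal, Matrix.diagonal_mul, Matrix.sub_apply,
        Matrix.add_apply]
    rw [e3, e1, e2, hml i, hml j]
    simp only [Pi.mul_apply, Pi.sub_apply]
    ring
  have hmono : ∀ v : Fin n → ℂ, MonotoneOn
      (fun t => (star v ⬝ᵥ ((M t * (Y t - X t) * M t) *ᵥ v)).re) (Set.Icc ρ₀ ρ) := by
    intro v
    have hd' : ∀ t ∈ Set.Ioc 0 T, HasDerivWithinAt
        (fun t => (star v ⬝ᵥ ((M t * (Y t - X t) * M t) *ᵥ v)).re)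
        (star v ⬝ᵥ (W t *ᵥ v)).re (Set.Ioc 0 T) t := by
      intro t ht
      have h : HasDerivWithinAt
        (fun t => (star v ⬝ᵥ ((M t * (Y t - X t) * M t) *ᵥ v)))
        (star v ⬝ᵥ (W t *ᵥ v)) (Set.Ioc 0 T) t := by
        simp only [dotProduct, Matrix.mulVec]
        refine HasDerivWithinAt.fun_sum fun i _ => HasDerivWithinAt.const_mul _ ?_
        exact HasDerivWithinAt.fun_sum fun j _ => (hder t ht i j).mul_const _
      exact Complex.reCLM.hasFDerivAt.comp_hasDerivWithinAt t h
    have hsub : Set.Icc ρ₀ ρ ⊆ Set.Ioc 0 T := fun t ht =>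
      ⟨hρ₀.1.trans_le ht.1, ht.2.trans hρ.2⟩
    refine monotoneOn_of_hasDerivWithinAt_nonneg (convex_Icc _ _)
      (f' := fun t => (star v ⬝ᵥ (W t *ᵥ v)).re) ?_ ?_ ?_
    · intro t ht
      exact ((hd' t (hsub ht)).mono hsub).continuousWithinAt
    · intro t ht
      exact (hd' t (hsub (interior_subset ht))).mono (interior_subset.trans hsub)
    · intro t ht
      exact (Complex.le_def.1
        ((hWpsd t (hsub (interior_subset ht))).dotProduct_mulVec_nonneg v)).1
  have hZH : (Y ρ - X ρ).IsHermitian := (hYH ρ).sub (hHerm ρ hρ)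
  have hG : (M ρ * (Y ρ - X ρ) * M ρ).PosSemidef := by
    have hGH : (M ρ * (Y ρ - X ρ) * M ρ).IsHermitian := by
      have := Matrix.isHermitian_conjTranspose_mul_mul (M ρ) hZH
      rwa [hMH] at this
    refine Matrix.PosSemidef.of_dotProduct_mulVec_nonneg hGH fun v => ?_
    have h1 := hmono v ⟨le_rfl, hle⟩ ⟨hle, le_rfl⟩ hle
    have h2 : (M ρ₀ * (Y ρ₀ - X ρ₀) * M ρ₀).PosSemidef := by
      have := (h0 ρ₀ ⟨hρ₀.1, le_rfl⟩).conjTranspose_mul_mul_same (M ρ₀)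
      rwa [hMH] at this
    have h3 := (Complex.le_def.1 (h2.dotProduct_mulVec_nonneg v)).1
    refine Complex.le_def.2 ⟨h3.trans h1, ?_⟩
    exact (hGH.im_star_dotProduct_mulVec_self v).symm
  set N : Matrix (Fin n) (Fin n) ℂ :=
    Matrix.diagonal (fun j => (((Real.sin (c j * ρ))⁻¹ : ℝ) : ℂ)) with hN
  have hNH : Nᴴ = N := by
    simp only [hN, Matrix.diagonal_conjTranspose]
    congr 1
    ext j
    simp only [Pi.star_apply, Complex.star_def, Complex.conj_ofReal]
  have h := hG.conjTranspose_mul_mul_same N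
  rw [hNH] at h
  convert h using 1
  ext i j
  have hi : (((Real.sin (c i * ρ)) : ℝ) : ℂ) ≠ 0 := by exact_mod_cast (hs ρ hρ i).ne'
  have hj : (((Real.sin (c j * ρ)) : ℝ) : ℂ) ≠ 0 := by exact_mod_cast (hs ρ hρ j).ne'
  simp only [hM, hN, Matrix.mul_diagonal, Matrix.diagonal_mul, Complex.ofReal_inv]
  generalize ((Real.sin (c i * ρ) : ℝ) : ℂ) = p at *
  generalize ((Real.sin (c j * ρ) : ℝ) : ℂ) = q at *
  field_simp

/-- Analytic form of the nearly Kähler Hessian comparison for `K > 0`: if the Hermitian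
`C¹` matrix-valued function `X` satisfies
`X' + X² + (Xe₁)(Xe₁)ᴴ ≤ D = diag(-K, -K/2, …, -K/2)` on `(0, T]` with
`T < π/√(2K)`, and `X ≤ Y` near `0` where
`Y(ρ) = diag((√(2K)/2)·cot(√(2K)ρ), √(K/2)·cot(√(K/2)ρ), …)`, then `X ρ ≤ Y ρ` for all
`ρ ∈ (0, T]`. -/
theorem nearly_kahler_hessian_comparison_pos (K : ℝ) (hK : 0 < K) (n : ℕ) (hn : 1 ≤ n)
    (T : ℝ) (hT : 0 < T) (hT' : T < Real.pi / Real.sqrt (2 * K))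
    (X X' : ℝ → Matrix (Fin n) (Fin n) ℂ)
    (e₁ : Fin n → ℂ) (he₁ : e₁ = fun i : Fin n => if (i : ℕ) = 0 then (1 : ℂ) else 0)
    (Y : ℝ → Matrix (Fin n) (Fin n) ℂ)
    (hY : Y = fun ρ => Matrix.diagonal (fun j : Fin n =>
      if (j : ℕ) = 0 then
        ((Real.sqrt (2 * K) / 2 *
          (Real.cos (Real.sqrt (2 * K) * ρ) / Real.sin (Real.sqrt (2 * K) * ρ)) : ℝ) : ℂ)
      else
        ((Real.sqrt (K / 2) *
          (Real.cos (Real.sqrt (K / 2) * ρ) / Real.sin (Real.sqrt (K / 2) * ρ)) : ℝ) : ℂ)))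
    (D : Matrix (Fin n) (Fin n) ℂ)
    (hD : D = Matrix.diagonal (fun j : Fin n =>
      if (j : ℕ) = 0 then ((-K : ℝ) : ℂ) else ((-(K / 2) : ℝ) : ℂ)))
    (hX : ∀ ρ ∈ Set.Ioc 0 T, ∀ i j,
      HasDerivWithinAt (fun t => X t i j) (X' ρ i j) (Set.Ioc 0 T) ρ)
    (hX' : ∀ i j, ContinuousOn (fun ρ => X' ρ i j) (Set.Ioc 0 T))
    (hHerm : ∀ ρ ∈ Set.Ioc 0 T, (X ρ).IsHermitian)
    (hineq : ∀ ρ ∈ Set.Ioc 0 T,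
      (D - (X' ρ + X ρ ^ 2 + vecMulVec (X ρ *ᵥ e₁) (star (X ρ *ᵥ e₁)))).PosSemidef)
    (hinit : ∃ ρ₀ ∈ Set.Ioc 0 T, ∀ ρ ∈ Set.Ioc 0 ρ₀, (Y ρ - X ρ).PosSemidef) :
    ∀ ρ ∈ Set.Ioc 0 T, (Y ρ - X ρ).PosSemidef := by
  have h2K : 0 < Real.sqrt (2 * K) := Real.sqrt_pos.2 (by positivity)
  have hK2 : 0 < Real.sqrt (K / 2) := Real.sqrt_pos.2 (by positivity)
  have hlt : Real.sqrt (K / 2) ≤ Real.sqrt (2 * K) := Real.sqrt_le_sqrt (by linarith)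
  have hTpi : Real.sqrt (2 * K) * T < Real.pi := by
    rw [lt_div_iff₀ h2K] at hT'
    linarith
  refine nk_core n T (fun j => if (j : ℕ) = 0 then Real.sqrt (2 * K) else Real.sqrt (K / 2))
    (fun j => if (j : ℕ) = 0 then 2 else 1)
    (fun j => if (j : ℕ) = 0 then -K else -(K / 2)) ?_ ?_ ?_ X X' Y ?_ hX hHerm ?_ hinit
  · intro j
    split_ifs <;> norm_num
  · intro j
    split_ifs
    · rw [Real.sq_sqrt (by positivity)]
      ring
    · rw [Real.sq_sqrt (by positivity)]
      ring
  · intro ρ hρ j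
    have h1 : Real.sqrt (2 * K) * ρ ≤ Real.sqrt (2 * K) * T :=
      mul_le_mul_of_nonneg_left hρ.2 h2K.le
    have h2 : Real.sqrt (K / 2) * ρ ≤ Real.sqrt (2 * K) * ρ :=
      mul_le_mul_of_nonneg_right hlt hρ.1.le
    split_ifs
    · exact Real.sin_pos_of_pos_of_lt_pi (mul_pos h2K hρ.1) (by linarith)
    · exact Real.sin_pos_of_pos_of_lt_pi (mul_pos hK2 hρ.1) (by linarith)
  · rw [hY]
    funext ρ
    congr 1
    funext j
    split_ifs
    · rfl
    · rw [div_one]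
  · intro ρ hρ
    have h := hineq ρ hρ
    convert h using 2
    · rw [hD]
      congr 1
      funext j
      split_ifs <;> rfl
    · rw [add_assoc]
      congr 1
      have hA : (Matrix.diagonal (fun j : Fin n => (((if (j : ℕ) = 0 then 2 else 1 : ℝ)) : ℂ)))
          = 1 + vecMulVec e₁ (star e₁) := by
        ext i j
        rw [he₁]
        by_cases hij : i = j
        · subst hij
          by_cases hi : (i : ℕ) = 0
          · simp [vecMulVec_apply, hi]
            norm_num
          · simp [vecMulVec_apply, hi]
        · by_cases hi : (i : ℕ) = 0
          · have hj : (j : ℕ) ≠ 0 := fun hj => hij (Fin.ext (hi.trans hj.symm))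
            simp [vecMulVec_apply, hij, hj]
          · simp [vecMulVec_apply, hij, hi]
      rw [hA, mul_add, add_mul, mul_one, pow_two, Matrix.mul_vecMulVec, Matrix.vecMulVec_mul,
        Matrix.star_mulVec, (hHerm ρ hρ).eq]
end

section
/- Analytic form of the nearly Kähler Hessian comparison for K < 0: Let K < 0, n ≥ 1, and T > 0. Let X : (0, T] → M_n(ℂ) be continuously differentiable with X(ρ) Hermitian for every ρ, and let e₁ ∈ ℂⁿ be the first standard basis vector. Let Y(ρ) be the diagonal matrix with first entry (√(−2K)/2)·coth(√(−2K)·ρ) and remaining diagonal entries √(−K/2)·coth(√(−K/2)·ρ). Assume that D(ρ) − ( X'(ρ) + X(ρ)² + (X(ρ)e₁)(X(ρ)e₁)* ) is positive semidefinite for all ρ ∈ (0, T], where D(ρ) is the constant diagonal matrix with first entry −K and remaining entries −K/2, and that there exists ρ₀ ∈ (0, T] with Y(ρ) − X(ρ) positive semidefinite for all ρ ∈ (0, ρ₀]. Then Y(ρ) − X(ρ) is positive semidefinite for every ρ ∈ (0, T]. -/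
open Matrix ComplexOrder

lemma herm_swap {n : ℕ} {M : Matrix (Fin n) (Fin n) ℂ} (hM : M.IsHermitian) (u w : Fin n → ℂ) :
    star w ⬝ᵥ M *ᵥ u = star (star u ⬝ᵥ M *ᵥ w) := by
  rw [← star_dotProduct_star, star_star, star_mulVec, hM.eq, ← dotProduct_mulVec,
    dotProduct_comm]

lemma deriv_quad {n : ℕ} (c : Fin n → ℝ) (v : Fin n → ℂ) (X : ℝ → Matrix (Fin n) (Fin n) ℂ)
    (X' : Matrix (Fin n) (Fin n) ℂ) (ρ : ℝ)
    (hX : ∀ i j, HasDerivAt (fun t => X t i j) (X' i j) ρ) :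
    HasDerivAt (fun t => star (fun j => (Real.sinh (c j * t) : ℂ) * v j) ⬝ᵥ
        X t *ᵥ (fun j => (Real.sinh (c j * t) : ℂ) * v j))
      (star (fun j => ((c j * Real.cosh (c j * ρ) : ℝ) : ℂ) * v j) ⬝ᵥ
          X ρ *ᵥ (fun j => (Real.sinh (c j * ρ) : ℂ) * v j)
        + star (fun j => (Real.sinh (c j * ρ) : ℂ) * v j) ⬝ᵥ
          X' *ᵥ (fun j => (Real.sinh (c j * ρ) : ℂ) * v j)
        + star (fun j => (Real.sinh (c j * ρ) : ℂ) * v j) ⬝ᵥ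
          X ρ *ᵥ (fun j => ((c j * Real.cosh (c j * ρ) : ℝ) : ℂ) * v j)) ρ := by
  have hs : ∀ j, HasDerivAt (fun t : ℝ => ((Real.sinh (c j * t) : ℝ) : ℂ))
      ((c j * Real.cosh (c j * ρ) : ℝ) : ℂ) ρ := by
    intro j
    have h1 : HasDerivAt (fun t : ℝ => Real.sinh (c j * t)) (c j * Real.cosh (c j * ρ)) ρ := by
      have := ((hasDerivAt_id ρ).const_mul (c j)).sinh
      simpa [mul_comm] using this
    exact h1.ofReal_comp
  simp only [dotProduct, mulVec, Pi.star_apply, star_mul', Complex.star_def, Complex.conj_ofReal,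
    ← Finset.sum_add_distrib]
  refine HasDerivAt.fun_sum fun i _ => ?_
  have hin : HasDerivAt (fun t => ∑ j, X t i j * ((Real.sinh (c j * t) : ℂ) * v j))
      (∑ j, (X' i j * ((Real.sinh (c j * ρ) : ℂ) * v j)
        + X ρ i j * (((c j * Real.cosh (c j * ρ) : ℝ) : ℂ) * v j))) ρ :=
    HasDerivAt.fun_sum fun j _ => (hX i j).mul ((hs j).mul_const (v j))
  have := ((hs i).mul_const ((starRingEnd ℂ) (v i))).mul hin
  refine this.congr_deriv ?_
  rw [Finset.sum_add_distrib]
  ring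

lemma mono_key {n : ℕ} (T : ℝ) (c m : Fin n → ℝ) (hm : ∀ j, 0 < m j)
    (X X' : ℝ → Matrix (Fin n) (Fin n) ℂ)
    (hX : ∀ ρ ∈ Set.Ioc 0 T, ∀ i j,
      HasDerivWithinAt (fun t => X t i j) (X' ρ i j) (Set.Ioc 0 T) ρ)
    (hHerm : ∀ ρ ∈ Set.Ioc 0 T, (X ρ).IsHermitian)
    (hq : ∀ ρ ∈ Set.Ioc 0 T, ∀ w : Fin n → ℂ, (star w ⬝ᵥ X' ρ *ᵥ w).re ≤
      ∑ j, (m j * c j ^ 2 * Complex.normSq (w j) - Complex.normSq ((X ρ *ᵥ w) j) / m j))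
    (v : Fin n → ℂ) :
    MonotoneOn (fun t => ∑ j, m j * c j * Real.cosh (c j * t) * Real.sinh (c j * t) *
        Complex.normSq (v j)
      - (star (fun j => (Real.sinh (c j * t) : ℂ) * v j) ⬝ᵥ
        X t *ᵥ (fun j => (Real.sinh (c j * t) : ℂ) * v j)).re) (Set.Ioc 0 T) := by
  have hco : ∀ i j, ContinuousOn (fun t => X t i j) (Set.Ioc 0 T) :=
    fun i j ρ hρ => (hX ρ hρ i j).continuousWithinAt
  have hder : ∀ ρ ∈ Set.Ioo 0 T, HasDerivAt (fun t => ∑ j, m j * c j * Real.cosh (c j * t) *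
        Real.sinh (c j * t) * Complex.normSq (v j)
      - (star (fun j => (Real.sinh (c j * t) : ℂ) * v j) ⬝ᵥ
        X t *ᵥ (fun j => (Real.sinh (c j * t) : ℂ) * v j)).re)
      (∑ j, m j * c j ^ 2 * (Real.sinh (c j * ρ) ^ 2 + Real.cosh (c j * ρ) ^ 2) *
          Complex.normSq (v j) - 
       (star (fun j => ((c j * Real.cosh (c j * ρ) : ℝ) : ℂ) * v j) ⬝ᵥ
          X ρ *ᵥ (fun j => (Real.sinh (c j * ρ) : ℂ) * v j)
        + star (fun j => (Real.sinh (c j * ρ) : ℂ) * v j) ⬝ᵥ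
          X' ρ *ᵥ (fun j => (Real.sinh (c j * ρ) : ℂ) * v j)
        + star (fun j => (Real.sinh (c j * ρ) : ℂ) * v j) ⬝ᵥ
          X ρ *ᵥ (fun j => ((c j * Real.cosh (c j * ρ) : ℝ) : ℂ) * v j)).re) ρ := by
    intro ρ hρ
    have h1 := deriv_quad c v X (X' ρ) ρ fun i j =>
      (hX ρ ⟨hρ.1, hρ.2.le⟩ i j).hasDerivAt (Ioc_mem_nhds hρ.1 hρ.2)
    have h2 := Complex.reCLM.hasFDerivAt.comp_hasDerivAt ρ h1
    refine HasDerivAt.sub (HasDerivAt.fun_sum fun j _ => ?_) h2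
    have ha : HasDerivAt (fun t : ℝ => Real.sinh (c j * t)) (c j * Real.cosh (c j * ρ)) ρ := by
      have := ((hasDerivAt_id ρ).const_mul (c j)).sinh
      simpa [mul_comm] using this
    have hb : HasDerivAt (fun t : ℝ => Real.cosh (c j * t)) (c j * Real.sinh (c j * ρ)) ρ := by
      have := ((hasDerivAt_id ρ).const_mul (c j)).cosh
      simpa [mul_comm] using this
    have := (((hb.const_mul (m j * c j)).mul ha).mul_const (Complex.normSq (v j)))
    refine this.congr_deriv ?_
    ring
  refine monotoneOn_of_deriv_nonneg (convex_Ioc 0 T) ?_ ?_ ?_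
  · refine ContinuousOn.sub (by fun_prop) (Complex.continuous_re.comp_continuousOn ?_)
    simp only [dotProduct, mulVec, Pi.star_apply]
    fun_prop
  · rw [interior_Ioc]
    exact fun ρ hρ => (hder ρ hρ).differentiableAt.differentiableWithinAt
  · rw [interior_Ioc]
    intro ρ hρ
    rw [(hder ρ hρ).deriv]
    have hρ' : ρ ∈ Set.Ioc 0 T := ⟨hρ.1, hρ.2.le⟩
    set w : Fin n → ℂ := fun j => (Real.sinh (c j * ρ) : ℂ) * v j with hw
    set u : Fin n → ℂ := fun j => ((c j * Real.cosh (c j * ρ) : ℝ) : ℂ) * v j with hu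
    have h1 := hq ρ hρ' w
    rw [herm_swap (hHerm ρ hρ') u w]
    simp only [Complex.add_re, Complex.star_def, Complex.conj_re]
    have h2 : 0 ≤ ∑ j, m j * Complex.normSq (u j - (X ρ *ᵥ w) j / m j) :=
      Finset.sum_nonneg fun j _ => mul_nonneg (hm j).le (Complex.normSq_nonneg _)
    have h3 : ∑ j, m j * Complex.normSq (u j - (X ρ *ᵥ w) j / m j) =
      ∑ j, m j * c j ^ 2 * (Real.sinh (c j * ρ) ^ 2 + Real.cosh (c j * ρ) ^ 2) *
          Complex.normSq (v j) - 2 * (star u ⬝ᵥ X ρ *ᵥ w).re -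
      ∑ j, (m j * c j ^ 2 * Complex.normSq (w j) - Complex.normSq ((X ρ *ᵥ w) j) / m j) := by
      rw [dotProduct, Complex.re_sum, Finset.mul_sum, ← Finset.sum_sub_distrib,
        ← Finset.sum_sub_distrib]
      refine Finset.sum_congr rfl fun j _ => ?_
      have hmj := (hm j).ne'
      generalize (X ρ *ᵥ w) j = g
      simp only [hu, hw, Pi.star_apply, Complex.normSq_sub, Complex.normSq_mul, Complex.normSq_div,
        Complex.normSq_ofReal, Complex.star_def]
      have : (((c j * Real.cosh (c j * ρ) : ℝ) : ℂ) * v j * (starRingEnd ℂ) (g / m j)).re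
        = ((starRingEnd ℂ) (((c j * Real.cosh (c j * ρ) : ℝ) : ℂ) * v j) * g).re / m j := by
        rw [← Complex.div_ofReal_re, ← Complex.conj_re]
        congr 1
        simp only [map_mul, map_div₀, Complex.conj_conj, Complex.conj_ofReal]
        ring
      rw [this]
      field_simp
      ring
    linarith

/-- Analytic form of the nearly Kähler Hessian comparison for `K < 0`: if the Hermitian
`C¹` matrix-valued function `X` satisfies
`X' + X² + (Xe₁)(Xe₁)ᴴ ≤ D = diag(-K, -K/2, …, -K/2)` on `(0, T]`, and `X ≤ Y` near `0`
where `Y(ρ) = diag((√(-2K)/2)·coth(√(-2K)ρ), √(-K/2)·coth(√(-K/2)ρ), …)`, then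
`X ρ ≤ Y ρ` for all `ρ ∈ (0, T]`. -/
theorem nearly_kahler_hessian_comparison_neg (K : ℝ) (hK : K < 0) (n : ℕ) (hn : 1 ≤ n)
    (T : ℝ) (hT : 0 < T)
    (X X' : ℝ → Matrix (Fin n) (Fin n) ℂ)
    (e₁ : Fin n → ℂ) (he₁ : e₁ = fun i : Fin n => if (i : ℕ) = 0 then (1 : ℂ) else 0)
    (Y : ℝ → Matrix (Fin n) (Fin n) ℂ)
    (hY : Y = fun ρ => Matrix.diagonal (fun j : Fin n =>
      if (j : ℕ) = 0 then
        ((Real.sqrt (-2 * K) / 2 *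
          (Real.cosh (Real.sqrt (-2 * K) * ρ) / Real.sinh (Real.sqrt (-2 * K) * ρ)) : ℝ) : ℂ)
      else
        ((Real.sqrt (-K / 2) *
          (Real.cosh (Real.sqrt (-K / 2) * ρ) / Real.sinh (Real.sqrt (-K / 2) * ρ)) : ℝ) : ℂ)))
    (D : Matrix (Fin n) (Fin n) ℂ)
    (hD : D = Matrix.diagonal (fun j : Fin n =>
      if (j : ℕ) = 0 then ((-K : ℝ) : ℂ) else ((-(K / 2) : ℝ) : ℂ)))
    (hX : ∀ ρ ∈ Set.Ioc 0 T, ∀ i j,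
      HasDerivWithinAt (fun t => X t i j) (X' ρ i j) (Set.Ioc 0 T) ρ)
    (hX' : ∀ i j, ContinuousOn (fun ρ => X' ρ i j) (Set.Ioc 0 T))
    (hHerm : ∀ ρ ∈ Set.Ioc 0 T, (X ρ).IsHermitian)
    (hineq : ∀ ρ ∈ Set.Ioc 0 T,
      (D - (X' ρ + X ρ ^ 2 + vecMulVec (X ρ *ᵥ e₁) (star (X ρ *ᵥ e₁)))).PosSemidef)
    (hinit : ∃ ρ₀ ∈ Set.Ioc 0 T, ∀ ρ ∈ Set.Ioc 0 ρ₀, (Y ρ - X ρ).PosSemidef) :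
    ∀ ρ ∈ Set.Ioc 0 T, (Y ρ - X ρ).PosSemidef := by
  have hc1 : 0 < Real.sqrt (-2 * K) := Real.sqrt_pos.2 (by linarith)
  have hc2 : 0 < Real.sqrt (-K / 2) := Real.sqrt_pos.2 (by linarith)
  have hs1 : Real.sqrt (-2 * K) ^ 2 = -2 * K := Real.sq_sqrt (by linarith)
  have hs2 : Real.sqrt (-K / 2) ^ 2 = -K / 2 := Real.sq_sqrt (by linarith)
  set c : Fin n → ℝ := fun j => if (j : ℕ) = 0 then Real.sqrt (-2 * K) else Real.sqrt (-K / 2)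
    with hc
  set m : Fin n → ℝ := fun j => if (j : ℕ) = 0 then 1 / 2 else 1 with hmdef
  have hm : ∀ j, 0 < m j := by
    intro j; simp only [hmdef]; split_ifs <;> norm_num
  have hcpos : ∀ j, 0 < c j := by
    intro j; simp only [hc]; split_ifs <;> assumption
  have hYd : ∀ ρ, Y ρ = Matrix.diagonal (fun j : Fin n =>
      ((m j * c j * (Real.cosh (c j * ρ) / Real.sinh (c j * ρ)) : ℝ) : ℂ)) := by
    intro ρ
    rw [hY]
    refine congrArg Matrix.diagonal ?_
    funext j
    simp only [hc, hmdef]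
    split_ifs
    · congr 1; ring
    · congr 1; ring
  have hDd : D = Matrix.diagonal (fun j : Fin n => ((m j * c j ^ 2 : ℝ) : ℂ)) := by
    rw [hD]
    congr 1
    funext j
    simp only [hc, hmdef]
    split_ifs
    · rw [hs1]; congr 1; ring
    · rw [hs2]; congr 1; ring
  have hdiag : ∀ (d : Fin n → ℝ) (w : Fin n → ℂ),
      (star w ⬝ᵥ Matrix.diagonal (fun j => (d j : ℂ)) *ᵥ w).re
        = ∑ j, d j * Complex.normSq (w j) := by
    intro d w
    simp only [dotProduct, mulVec_diagonal, Pi.star_apply, Complex.re_sum, Complex.star_def]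
    refine Finset.sum_congr rfl fun j _ => ?_
    rw [mul_left_comm, mul_comm ((starRingEnd ℂ) _), Complex.mul_conj, ← Complex.ofReal_mul,
      Complex.ofReal_re]
  have hq : ∀ ρ ∈ Set.Ioc 0 T, ∀ w : Fin n → ℂ, (star w ⬝ᵥ X' ρ *ᵥ w).re ≤
      ∑ j, (m j * c j ^ 2 * Complex.normSq (w j) - Complex.normSq ((X ρ *ᵥ w) j) / m j) := by
    intro ρ hρ w
    have h := (Complex.le_def.1 ((hineq ρ hρ).dotProduct_mulVec_nonneg w)).1
    have hH := hHerm ρ hρ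
    rw [hDd, sub_mulVec, add_mulVec, add_mulVec, dotProduct_sub, dotProduct_add, dotProduct_add,
      Complex.sub_re, Complex.add_re, Complex.add_re, hdiag] at h
    have e1 : (star w ⬝ᵥ (X ρ ^ 2) *ᵥ w).re = ∑ j, Complex.normSq ((X ρ *ᵥ w) j) := by
      rw [pow_two, ← mulVec_mulVec, dotProduct_mulVec]
      have : star w ᵥ* X ρ = star (X ρ *ᵥ w) := by rw [star_mulVec, hH.eq]
      rw [this]
      simp only [dotProduct, Pi.star_apply, Complex.re_sum, Complex.star_def]
      refine Finset.sum_congr rfl fun j _ => ?_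
      rw [mul_comm, Complex.mul_conj, Complex.ofReal_re]
    have e2 : (star w ⬝ᵥ (vecMulVec (X ρ *ᵥ e₁) (star (X ρ *ᵥ e₁))) *ᵥ w).re
        = ∑ j : Fin n, if (j : ℕ) = 0 then Complex.normSq ((X ρ *ᵥ w) j) else 0 := by
      have hn0 : 0 < n := hn
      have hz : ∀ j : Fin n, ((j : ℕ) = 0) = (j = ⟨0, hn0⟩) := by
        intro j; simp [Fin.ext_iff]
      have k1 : star (X ρ *ᵥ e₁) ⬝ᵥ w = (X ρ *ᵥ w) ⟨0, hn0⟩ := by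
        rw [star_mulVec, hH.eq, ← dotProduct_mulVec, he₁]
        simp [dotProduct, hz]
      have k2 : star w ⬝ᵥ (X ρ *ᵥ e₁) = star ((X ρ *ᵥ w) ⟨0, hn0⟩) := by
        rw [← k1, star_dotProduct]
      rw [vecMulVec_mulVec, k1]
      simp only [hz, Finset.sum_ite_eq', Finset.mem_univ, if_true]
      simp only [dotProduct_smul, k2]
      simp [Complex.normSq_apply]
    rw [e1, e2] at h
    have e3 : ∑ j, (m j * c j ^ 2 * Complex.normSq (w j) - Complex.normSq ((X ρ *ᵥ w) j) / m j)
      = ∑ j, (m j * c j ^ 2 * Complex.normSq (w j)) - (∑ j, Complex.normSq ((X ρ *ᵥ w) j)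
        + ∑ j : Fin n, if (j : ℕ) = 0 then Complex.normSq ((X ρ *ᵥ w) j) else 0) := by
      rw [← Finset.sum_add_distrib, ← Finset.sum_sub_distrib]
      refine Finset.sum_congr rfl fun j _ => ?_
      simp only [hmdef]
      split_ifs <;> ring
    rw [e3]
    simp only [Complex.zero_re] at h
    linarith
  have hval : ∀ ρ, 0 < ρ → ∀ v : Fin n → ℂ,
      (star (fun j => (Real.sinh (c j * ρ) : ℂ) * v j) ⬝ᵥ
        (Y ρ - X ρ) *ᵥ (fun j => (Real.sinh (c j * ρ) : ℂ) * v j)).re =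
      ∑ j, m j * c j * Real.cosh (c j * ρ) * Real.sinh (c j * ρ) * Complex.normSq (v j)
      - (star (fun j => (Real.sinh (c j * ρ) : ℂ) * v j) ⬝ᵥ
        X ρ *ᵥ (fun j => (Real.sinh (c j * ρ) : ℂ) * v j)).re := by
    intro ρ hρ v
    rw [sub_mulVec, dotProduct_sub, Complex.sub_re, hYd, hdiag]
    congr 1
    refine Finset.sum_congr rfl fun j _ => ?_
    have : Real.sinh (c j * ρ) ≠ 0 := (Real.sinh_pos_iff.2 (mul_pos (hcpos j) hρ)).ne'
    rw [Complex.normSq_mul, Complex.normSq_ofReal]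
    field_simp
  obtain ⟨r, hr, hrY⟩ := hinit
  intro ρ hρ
  rcases le_total ρ r with hle | hle
  · exact hrY ρ ⟨hρ.1, hle⟩
  have hZ : (Y ρ - X ρ).IsHermitian := by
    refine IsHermitian.sub ?_ (hHerm ρ hρ)
    rw [hYd]
    refine isHermitian_diagonal_of_self_adjoint _ ?_
    rw [isSelfAdjoint_iff]
    funext j
    simp only [Pi.star_apply, Complex.star_def, Complex.conj_ofReal]
  refine PosSemidef.of_dotProduct_mulVec_nonneg hZ fun x => ?_
  have hx : x = fun j => (Real.sinh (c j * ρ) : ℂ) * (x j / (Real.sinh (c j * ρ) : ℂ)) := by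
    funext j
    have : (Real.sinh (c j * ρ) : ℂ) ≠ 0 :=
      Complex.ofReal_ne_zero.2 (Real.sinh_pos_iff.2 (mul_pos (hcpos j) hρ.1)).ne'
    field_simp
  have hmono := mono_key T c m hm X X' hX hHerm hq
    (fun j => x j / (Real.sinh (c j * ρ) : ℂ)) hr hρ hle
  simp only at hmono
  rw [← hval r hr.1, ← hval ρ hρ.1, ← hx] at hmono
  have h0 := (Complex.le_def.1 ((hrY r ⟨hr.1, le_rfl⟩).dotProduct_mulVec_nonneg
    (fun j => (Real.sinh (c j * r) : ℂ) * (x j / (Real.sinh (c j * ρ) : ℂ))))).1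
  refine Complex.le_def.2 ⟨h0.trans hmono, ?_⟩
  have := herm_swap hZ x x
  have h4 := congrArg Complex.im this
  simp only [Complex.star_def, Complex.conj_im] at h4
  simp only [Complex.zero_im]
  linarith
end

section
/- Analytic form of the nearly Kähler Hessian comparison for K = 0: Let n ≥ 1 and T > 0. Let X : (0, T] → M_n(ℂ) be continuously differentiable with X(ρ) Hermitian for every ρ, and let e₁ ∈ ℂⁿ be the first standard basis vector. Let Y(ρ) be the diagonal matrix with first entry 1/(2ρ) and remaining diagonal entries 1/ρ. Assume that −( X'(ρ) + X(ρ)² + (X(ρ)e₁)(X(ρ)e₁)* ) is positive semidefinite for all ρ ∈ (0, T], and that there exists ρ₀ ∈ (0, T] with Y(ρ) − X(ρ) positive semidefinite for all ρ ∈ (0, ρ₀]. Then Y(ρ) − X(ρ) is positive semidefinite for every ρ ∈ (0, T]. -/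
open Matrix ComplexOrder

/-- real part of the quadratic form -/
noncomputable def qform {n : ℕ} (M : Matrix (Fin n) (Fin n) ℂ) (v : Fin n → ℂ) : ℝ :=
  (star v ⬝ᵥ (M *ᵥ v)).re

def unitK (n : ℕ) : Set (Fin n → ℂ) := {v | ∑ i, ‖v i‖ ^ 2 = 1}

lemma unitK_compact (n : ℕ) : IsCompact (unitK n) := by
  apply Metric.isCompact_of_isClosed_isBounded
  · exact isClosed_eq (by fun_prop) continuous_const
  · refine (Metric.isBounded_closedBall (x := (0 : Fin n → ℂ)) (r := 1)).subset ?_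
    intro v hv
    rw [mem_closedBall_zero_iff, pi_norm_le_iff_of_nonneg zero_le_one]
    intro i
    have h1 : ‖v i‖ ^ 2 ≤ ∑ i, ‖v i‖ ^ 2 :=
      Finset.single_le_sum (f := fun i => ‖v i‖ ^ 2) (fun _ _ => by positivity) (Finset.mem_univ i)
    rw [show ∑ i, ‖v i‖ ^ 2 = 1 from hv] at h1
    nlinarith [norm_nonneg (v i)]

lemma qform_continuous (n : ℕ) :
    Continuous (fun p : Matrix (Fin n) (Fin n) ℂ × (Fin n → ℂ) => qform p.1 p.2) := by
  unfold qform
  refine Complex.continuous_re.comp ?_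
  exact (continuous_snd.star).dotProduct (continuous_fst.matrix_mulVec continuous_snd)

lemma qform_contOn {n : ℕ} {Z : ℝ → Matrix (Fin n) (Fin n) ℂ} {s : Set ℝ} (hZ : ContinuousOn Z s) :
    ContinuousOn (fun p : ℝ × (Fin n → ℂ) => qform (Z p.1) p.2) (s ×ˢ unitK n) := by
  have h1 : ContinuousOn (fun p : ℝ × (Fin n → ℂ) => Z p.1) (s ×ˢ unitK n) :=
    ContinuousOn.comp (g := Z) (f := Prod.fst) (t := s) hZ continuousOn_fst
      (fun p hp => (Set.mem_prod.1 hp).1)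
  unfold qform
  refine Complex.continuous_re.comp_continuousOn ?_
  simp only [dotProduct, mulVec]
  refine continuousOn_finsetSum _ fun i _ => ContinuousOn.mul ?_ ?_
  · exact Continuous.continuousOn (by simp only [Pi.star_apply]; fun_prop)
  refine continuousOn_finsetSum _ fun j _ => ContinuousOn.mul ?_ ?_
  · exact continuousOn_pi.1 (continuousOn_pi.1 h1 i) j
  · exact Continuous.continuousOn (by fun_prop)

lemma qform_add {n : ℕ} (M N : Matrix (Fin n) (Fin n) ℂ) (v : Fin n → ℂ) :
    qform (M + N) v = qform M v + qform N v := by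
  simp [qform, add_mulVec, dotProduct_add]

lemma qform_smul {n : ℕ} (c : ℝ) (M : Matrix (Fin n) (Fin n) ℂ) (v : Fin n → ℂ) :
    qform ((c : ℂ) • M) v = c * qform M v := by
  simp [qform, smul_mulVec, dotProduct_smul]

lemma qform_smul_vec {n : ℕ} (c : ℝ) (M : Matrix (Fin n) (Fin n) ℂ) (v : Fin n → ℂ) :
    qform M ((c : ℂ) • v) = c ^ 2 * qform M v := by
  simp [qform, mulVec_smul, dotProduct_smul]; ring

lemma qform_one {n : ℕ} (v : Fin n → ℂ) : qform 1 v = ∑ i, ‖v i‖ ^ 2 := by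
  simp [qform, dotProduct, Complex.sq_norm, Complex.normSq_apply]

lemma qform_deriv {n : ℕ} {Z : ℝ → Matrix (Fin n) (Fin n) ℂ} {Z' : Matrix (Fin n) (Fin n) ℂ}
    {s : Set ℝ} {t : ℝ} (h : ∀ i j, HasDerivWithinAt (fun t => Z t i j) (Z' i j) s t)
    (v : Fin n → ℂ) : HasDerivWithinAt (fun t => qform (Z t) v) (qform Z' v) s t := by
  unfold qform
  refine Complex.reCLM.hasFDerivAt.comp_hasDerivWithinAt t (f := fun t => star v ⬝ᵥ (Z t *ᵥ v)) ?_
  simp only [dotProduct, mulVec]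
  refine HasDerivWithinAt.fun_sum fun i _ => HasDerivWithinAt.const_mul _ ?_
  exact HasDerivWithinAt.fun_sum fun j _ => (h i j).mul_const _

lemma posSemidef_of_qform {n : ℕ} {M : Matrix (Fin n) (Fin n) ℂ} (hM : M.IsHermitian)
    (h : ∀ v ∈ unitK n, 0 ≤ qform M v) : M.PosSemidef := by
  refine Matrix.PosSemidef.of_dotProduct_mulVec_nonneg hM fun v => ?_
  have him : (star v ⬝ᵥ (M *ᵥ v)).im = 0 := hM.im_star_dotProduct_mulVec_self v
  rw [Complex.le_def]
  refine ⟨?_, by simp [him]⟩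
  change 0 ≤ qform M v
  by_cases hv : ∑ i, ‖v i‖ ^ 2 = 0
  · have : v = 0 := by
      ext i
      have := (Finset.sum_eq_zero_iff_of_nonneg (fun i _ => by positivity)).1 hv i (Finset.mem_univ i)
      simpa using this
    simp [this, qform]
  · have hp : 0 < ∑ i, ‖v i‖ ^ 2 := lt_of_le_of_ne (by positivity) (Ne.symm hv)
    set S := ∑ i, ‖v i‖ ^ 2 with hS
    have hs : 0 < Real.sqrt S := Real.sqrt_pos.2 hp
    have h2 := h (((Real.sqrt S)⁻¹ : ℝ) • v) (by
      simp only [unitK, Set.mem_ofPred_eq, Pi.smul_apply, norm_smul, mul_pow, ← Finset.mul_sum]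
      rw [← hS]
      simp [Real.sq_sqrt hp.le, hp.ne'])
    have h3 : (((Real.sqrt S)⁻¹ : ℝ) • v) = (((Real.sqrt S)⁻¹ : ℝ) : ℂ) • v := by
      ext i; simp
    rw [h3, qform_smul_vec] at h2
    exact nonneg_of_mul_nonneg_right h2 (by positivity)

lemma strict_lemma {n : ℕ} (a b : ℝ) (Z Z' : ℝ → Matrix (Fin n) (Fin n) ℂ)
    (hZ : ∀ t ∈ Set.Icc a b, ∀ i j, HasDerivWithinAt (fun t => Z t i j) (Z' t i j) (Set.Icc a b) t)
    (hH : ∀ t ∈ Set.Icc a b, (Z t).IsHermitian)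
    (ha : ∀ v ∈ unitK n, 0 < qform (Z a) v)
    (hd : ∀ t ∈ Set.Icc a b, ∀ v ∈ unitK n, Z t *ᵥ v = 0 → 0 < qform (Z' t) v) :
    ∀ t ∈ Set.Icc a b, ∀ v ∈ unitK n, 0 < qform (Z t) v := by
  by_contra! hcon
  obtain ⟨t0, ht0, v0, hv0, hneg⟩ := hcon
  have hZc : ContinuousOn Z (Set.Icc a b) :=
    continuousOn_pi.2 fun i => continuousOn_pi.2 fun j => fun t ht => (hZ t ht i j).continuousWithinAt
  have hgc : ContinuousOn (fun p : ℝ × (Fin n → ℂ) => qform (Z p.1) p.2)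
      (Set.Icc a b ×ˢ unitK n) :=
    qform_contOn hZc
  have hK : IsCompact (Set.Icc a b ×ˢ unitK n) := isCompact_Icc.prod (unitK_compact n)
  have hC : IsCompact ((Set.Icc a b ×ˢ unitK n) ∩
      (fun p : ℝ × (Fin n → ℂ) => qform (Z p.1) p.2) ⁻¹' Set.Iic 0) :=
    hK.of_isClosed_subset (hgc.preimage_isClosed_of_isClosed hK.isClosed isClosed_Iic)
      Set.inter_subset_left
  obtain ⟨⟨t1, v⟩, ⟨⟨ht1, hv⟩, hle⟩, hmin⟩ := hC.exists_isMinOn ⟨(t0, v0), ⟨ht0, hv0⟩, hneg⟩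
    continuous_fst.continuousOn
  simp only [Set.mem_preimage, Set.mem_Iic] at hle ht1 hv
  have hpos : ∀ t ∈ Set.Ico a t1, ∀ w ∈ unitK n, 0 < qform (Z t) w := by
    intro t ht w hw
    by_contra! hc
    have := hmin (a := (t, w)) ⟨⟨⟨ht.1, ht.2.le.trans ht1.2⟩, hw⟩, hc⟩
    exact absurd ht.2 (not_lt.2 this)
  have hat : a < t1 := by
    refine lt_of_le_of_ne ht1.1 fun h => ?_
    have := ha v hv
    rw [h] at this
    linarith
  have hev : ∀ᶠ t in nhdsWithin t1 (Set.Iio t1), t ∈ Set.Ico a t1 := by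
    filter_upwards [Ioo_mem_nhdsLT hat] with t ht using ⟨ht.1.le, ht.2⟩
  have hder : ∀ w, HasDerivWithinAt (fun t => qform (Z t) w) (qform (Z' t1) w) (Set.Iio t1) t1 := by
    intro w
    refine (qform_deriv (hZ t1 ht1) w).mono_of_mem_nhdsWithin ?_
    filter_upwards [hev] with t ht using ⟨ht.1, ht.2.le.trans ht1.2⟩
  have hnn : ∀ w ∈ unitK n, 0 ≤ qform (Z t1) w := by
    intro w hw
    refine ge_of_tendsto (hder w).continuousWithinAt ?_
    filter_upwards [hev] with t ht using (hpos t ht w hw).le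
  have hpsd := posSemidef_of_qform (hH t1 ht1) hnn
  have h0 : qform (Z t1) v = 0 := le_antisymm hle (hnn v hv)
  have hz : Z t1 *ᵥ v = 0 := by
    rw [← hpsd.dotProduct_mulVec_zero_iff]
    exact Complex.ext h0 ((hH t1 ht1).im_star_dotProduct_mulVec_self v)
  have hlt := hd t1 ht1 v hv hz
  have hs := (hasDerivWithinAt_iff_tendsto_slope' (by simp)).1 (hder v)
  have : qform (Z' t1) v ≤ 0 := by
    refine le_of_tendsto hs ?_
    filter_upwards [hev] with t ht
    rw [slope_def_field, h0, sub_zero]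
    exact div_nonpos_of_nonneg_of_nonpos (hpos t ht v hv).le (by linarith [ht.2])
  linarith

lemma linear_lemma {n : ℕ} (a b : ℝ) (Z Z' B : ℝ → Matrix (Fin n) (Fin n) ℂ)
    (hZ : ∀ t ∈ Set.Icc a b, ∀ i j, HasDerivWithinAt (fun t => Z t i j) (Z' t i j) (Set.Icc a b) t)
    (hH : ∀ t ∈ Set.Icc a b, (Z t).IsHermitian)
    (hB : ContinuousOn B (Set.Icc a b))
    (ha : (Z a).PosSemidef)
    (hd : ∀ t ∈ Set.Icc a b, (Z' t + Z t * B t + (B t)ᴴ * Z t).PosSemidef) :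
    ∀ t ∈ Set.Icc a b, (Z t).PosSemidef := by
  have hK : IsCompact (Set.Icc a b ×ˢ unitK n) := isCompact_Icc.prod (unitK_compact n)
  have hgc : ContinuousOn (fun p : ℝ × (Fin n → ℂ) => qform (B p.1) p.2)
      (Set.Icc a b ×ˢ unitK n) :=
    qform_contOn hB
  obtain ⟨C, hC⟩ := hK.exists_bound_of_continuousOn hgc
  set L := 2 * C + 1 with hL
  have key : ∀ ε > 0, ∀ t ∈ Set.Icc a b, ∀ v ∈ unitK n,
      0 < qform (Z t + ((ε * Real.exp (L * t) : ℝ) : ℂ) • 1) v := by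
    intro ε hε
    refine strict_lemma a b _ (fun t => Z' t + ((ε * (Real.exp (L * t) * L) : ℝ) : ℂ) • 1) ?_ ?_ ?_ ?_
    · intro t ht i j
      simp only [Matrix.add_apply, Matrix.smul_apply, smul_eq_mul]
      refine (hZ t ht i j).add (HasDerivWithinAt.mul_const ?_ _)
      refine HasDerivAt.hasDerivWithinAt (HasDerivAt.ofReal_comp ?_)
      refine HasDerivAt.const_mul _ ?_
      simpa using ((hasDerivAt_id t).const_mul L).exp
    · intro t ht
      refine (hH t ht).add ?_
      rw [Matrix.IsHermitian, conjTranspose_smul, conjTranspose_one]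
      exact congrArg (fun c : ℂ => c • (1 : Matrix (Fin n) (Fin n) ℂ)) (Complex.conj_ofReal _)
    · intro v hv
      rw [qform_add, qform_smul, qform_one, show ∑ i, ‖v i‖ ^ 2 = 1 from hv]
      have : 0 ≤ qform (Z a) v := (Complex.le_def.1 (ha.dotProduct_mulVec_nonneg v)).1
      positivity
    · intro t ht v hv h0
      set E := ε * Real.exp (L * t) with hE
      have hEp : 0 < E := by positivity
      have h1 : 0 ≤ qform (Z' t + Z t * B t + (B t)ᴴ * Z t) v :=
        (Complex.le_def.1 ((hd t ht).dotProduct_mulVec_nonneg v)).1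
      have hZv : Z t *ᵥ v = -((E : ℂ) • v) := by
        rw [add_mulVec, smul_mulVec, one_mulVec] at h0
        exact eq_neg_of_add_eq_zero_left h0
      have h2 : qform ((B t)ᴴ * Z t) v = - (E * qform (B t) v) := by
        unfold qform
        rw [← mulVec_mulVec, hZv, mulVec_neg, mulVec_smul, dotProduct_neg, dotProduct_smul,
          dotProduct_mulVec, ← star_mulVec, star_dotProduct]
        simp
      have h3 : qform (Z t * B t) v = - (E * qform (B t) v) := by
        rw [← h2]
        have e : (B t)ᴴ * Z t = (Z t * B t)ᴴ := by rw [conjTranspose_mul, (hH t ht).eq]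
        unfold qform
        rw [e, dotProduct_mulVec (star v) (Z t * B t)ᴴ, ← star_mulVec, star_dotProduct]
        simp
      have h4 := abs_le.1 (hC (t, v) ⟨ht, hv⟩)
      rw [qform_add, qform_add, h2, h3] at h1
      rw [qform_add, qform_smul, qform_one, show ∑ i, ‖v i‖ ^ 2 = 1 from hv, ← mul_assoc, ← hE]
      have h5 : qform (B t) v ≥ - C := h4.1
      have : E * (L + 2 * qform (B t) v) > 0 := by
        apply mul_pos hEp; linarith
      nlinarith
  intro t ht
  refine posSemidef_of_qform (hH t ht) fun v hv => ?_
  refine le_of_forall_pos_le_add fun δ hδ => ?_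
  have := key (δ / Real.exp (L * t)) (by positivity) t ht v hv
  rw [qform_add, qform_smul, qform_one, show ∑ i, ‖v i‖ ^ 2 = 1 from hv,
    div_mul_cancel₀ _ (Real.exp_pos _).ne'] at this
  linarith

/-- Analytic form of the nearly Kähler Hessian comparison for `K = 0`: if the Hermitian
`C¹` matrix-valued function `X` satisfies `X' + X² + (Xe₁)(Xe₁)ᴴ ≤ 0` on `(0, T]`, and
`X ≤ Y` near `0` where `Y(ρ) = diag(1/(2ρ), 1/ρ, …, 1/ρ)`, then `X ρ ≤ Y ρ` for all
`ρ ∈ (0, T]`. -/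
theorem nearly_kahler_hessian_comparison_zero (n : ℕ) (hn : 1 ≤ n)
    (T : ℝ) (hT : 0 < T)
    (X X' : ℝ → Matrix (Fin n) (Fin n) ℂ)
    (e₁ : Fin n → ℂ) (he₁ : e₁ = fun i : Fin n => if (i : ℕ) = 0 then (1 : ℂ) else 0)
    (Y : ℝ → Matrix (Fin n) (Fin n) ℂ)
    (hY : Y = fun ρ => Matrix.diagonal (fun j : Fin n =>
      if (j : ℕ) = 0 then ((1 / (2 * ρ) : ℝ) : ℂ) else ((1 / ρ : ℝ) : ℂ)))
    (hX : ∀ ρ ∈ Set.Ioc 0 T, ∀ i j,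
      HasDerivWithinAt (fun t => X t i j) (X' ρ i j) (Set.Ioc 0 T) ρ)
    (hX' : ∀ i j, ContinuousOn (fun ρ => X' ρ i j) (Set.Ioc 0 T))
    (hHerm : ∀ ρ ∈ Set.Ioc 0 T, (X ρ).IsHermitian)
    (hineq : ∀ ρ ∈ Set.Ioc 0 T,
      (-(X' ρ + X ρ ^ 2 + vecMulVec (X ρ *ᵥ e₁) (star (X ρ *ᵥ e₁)))).PosSemidef)
    (hinit : ∃ ρ₀ ∈ Set.Ioc 0 T, ∀ ρ ∈ Set.Ioc 0 ρ₀, (Y ρ - X ρ).PosSemidef) :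
    ∀ ρ ∈ Set.Ioc 0 T, (Y ρ - X ρ).PosSemidef := by
  obtain ⟨ρ₀, hρ₀, hinit⟩ := hinit
  intro ρ hρ
  rcases le_or_gt ρ ρ₀ with hle | hlt
  · exact hinit ρ ⟨hρ.1, hle⟩
  have hsub : Set.Icc ρ₀ T ⊆ Set.Ioc 0 T := fun t ht => ⟨hρ₀.1.trans_le ht.1, ht.2⟩
  set P : Matrix (Fin n) (Fin n) ℂ := 1 + vecMulVec e₁ (star e₁) with hP
  have hPd : P = Matrix.diagonal (fun j : Fin n => if (j : ℕ) = 0 then (2 : ℂ) else 1) := by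
    ext i j
    rw [hP, he₁]
    by_cases hij : i = j
    · subst hij
      by_cases h0 : (i : ℕ) = 0 <;> simp [vecMulVec_apply, h0]
      norm_num
    · by_cases h0 : (i : ℕ) = 0 <;> by_cases h1 : (j : ℕ) = 0 <;>
        simp [vecMulVec_apply, h0, h1, hij]
      exact hij (Fin.ext (h0.trans h1.symm))
  have hPH : Pᴴ = P := by
    rw [hPd, diagonal_conjTranspose]
    congr 1
    ext j
    by_cases h0 : (j : ℕ) = 0 <;> simp [h0]
  set Y' : ℝ → Matrix (Fin n) (Fin n) ℂ := fun ρ => Matrix.diagonal (fun j : Fin n =>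
      if (j : ℕ) = 0 then ((-(1 / (2 * ρ ^ 2)) : ℝ) : ℂ) else ((-(1 / ρ ^ 2) : ℝ) : ℂ)) with hY'
  have hYd : ∀ t ∈ Set.Icc ρ₀ T, ∀ i j,
      HasDerivWithinAt (fun t => Y t i j) (Y' t i j) (Set.Icc ρ₀ T) t := by
    intro t ht i j
    have ht0 : t ≠ 0 := (hsub ht).1.ne'
    simp only [hY, hY']
    by_cases hij : i = j
    · subst hij
      simp only [diagonal_apply_eq]
      by_cases h0 : (i : ℕ) = 0
      · simp only [h0, if_true]
        refine HasDerivAt.hasDerivWithinAt (HasDerivAt.ofReal_comp ?_)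
        have := (hasDerivAt_inv ht0).const_mul (1 / 2)
        have e1 : (fun t : ℝ => 1 / (2 * t)) = fun y => 1 / 2 * y⁻¹ := by
          funext x; ring
        have e2 : -(1 / (2 * t ^ 2)) = 1 / 2 * -(t ^ 2)⁻¹ := by ring
        rw [e1, e2]
        exact this
      · simp only [h0, if_false]
        refine HasDerivAt.hasDerivWithinAt (HasDerivAt.ofReal_comp ?_)
        have := hasDerivAt_inv ht0
        have e1 : (fun t : ℝ => 1 / t) = fun y => y⁻¹ := by
          funext x; ring
        have e2 : -(1 / t ^ 2) = -(t ^ 2)⁻¹ := by ring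
        change HasDerivAt (fun t : ℝ => 1 / t) _ t
        rw [e1, e2]
        exact this
    · simp only [diagonal_apply_ne _ hij]
      exact hasDerivWithinAt_const _ _ _
  have hYR : ∀ t ∈ Set.Icc ρ₀ T, Y' t + Y t * P * Y t = 0 := by
    intro t ht
    have ht0 : (t : ℂ) ≠ 0 := by exact_mod_cast (hsub ht).1.ne'
    rw [hPd]
    simp only [hY, hY', diagonal_mul_diagonal, diagonal_add]
    rw [← diagonal_zero]
    congr 1
    ext j
    by_cases h0 : (j : ℕ) = 0
    · simp [h0]; field_simp; norm_num
    · simp [h0]; field_simp; norm_num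
  have hYH : ∀ t, (Y t)ᴴ = Y t := by
    intro t
    simp only [hY]
    rw [diagonal_conjTranspose]
    congr 1
    ext j
    by_cases h0 : (j : ℕ) = 0 <;> simp [h0]
  have hXd : ∀ t ∈ Set.Icc ρ₀ T, ∀ i j,
      HasDerivWithinAt (fun t => X t i j) (X' t i j) (Set.Icc ρ₀ T) t :=
    fun t ht i j => (hX t (hsub ht) i j).mono hsub
  have hXc : ContinuousOn X (Set.Icc ρ₀ T) :=
    continuousOn_pi.2 fun i => continuousOn_pi.2 fun j => fun t ht =>
      (hXd t ht i j).continuousWithinAt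
  have hYc : ContinuousOn Y (Set.Icc ρ₀ T) :=
    continuousOn_pi.2 fun i => continuousOn_pi.2 fun j => fun t ht =>
      (hYd t ht i j).continuousWithinAt
  have hBc : ContinuousOn (fun t => P * ((1 / 2 : ℂ) • (X t + Y t))) (Set.Icc ρ₀ T) :=
    continuousOn_const.mul ((hXc.fun_add hYc).fun_const_smul _)
  refine linear_lemma ρ₀ T (fun t => Y t - X t) (fun t => Y' t - X' t)
    (fun t => P * ((1 / 2 : ℂ) • (X t + Y t))) ?_ ?_ hBc
    (hinit ρ₀ ⟨hρ₀.1, le_rfl⟩) ?_ ρ ⟨hlt.le, hρ.2⟩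
  · intro t ht i j
    exact (hYd t ht i j).sub (hXd t ht i j)
  · intro t ht
    exact Matrix.IsHermitian.sub (hYH t) (hHerm t (hsub ht))
  · intro t ht
    have hXH : (X t)ᴴ = X t := hHerm t (hsub ht)
    have h := hineq t (hsub ht)
    have hv : vecMulVec (X t *ᵥ e₁) (star (X t *ᵥ e₁)) = X t * vecMulVec e₁ (star e₁) * X t := by
      rw [star_mulVec, hXH, ← mul_vecMulVec, ← vecMulVec_mul, Matrix.mul_assoc]
    rw [hv] at h
    have hYt := hYR t ht
    have hhalf : (1 / 2 : ℂ) + 1 / 2 = 1 := by norm_num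
    convert h using 1
    have e1 : -(X' t + X t ^ 2 + X t * vecMulVec e₁ (star e₁) * X t)
        = (Y' t + Y t * P * Y t) - (X' t + X t * P * X t) := by
      rw [hYt, hP]; noncomm_ring
    have hs : star (1 / 2 : ℂ) = 1 / 2 := by simp
    rw [e1, conjTranspose_mul, hPH, conjTranspose_smul, conjTranspose_add, hXH, hYH, hs]
    simp only [mul_smul_comm, smul_mul_assoc]
    have e2 : (Y t - X t) * (P * (X t + Y t)) + (X t + Y t) * P * (Y t - X t)
        = (2 : ℂ) • (Y t * P * Y t - X t * P * X t) := by
      rw [two_smul]; noncomm_ring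
    rw [add_assoc, ← smul_add, e2, smul_smul]
    norm_num
    abel
end
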